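/- arXiv:2506.20395 — 8 statements merged into one kernel-verified Lean document; each statement's English description precedes it below -/
import Mathlib

section
/- Let K be a field of characteristic 0 and let A be a finite-dimensional ℤ₂-graded associative unital K-algebra which is graded-simple (it has no nonzero proper ℤ₂-graded two-sided ideals) and central (its center equals K·1). Then for every ℤ₂-graded associative unital K-algebra B there exists an A-universal supermap for B, i.e. a supercommutative K-algebra Ξ and a graded K-algebra homomorphism ρ: B → A⊗Ξ such that (a) the only graded unital K-subalgebra Ξ' of Ξ with ρ(B) ⊆ A⊗Ξ' is Ξ' = Ξ, and (b) for every supercommutative K-algebra F and every graded homomorphism κ: B → A⊗F there exists a graded homomorphism ζ: Ξ → F with (id_A⊗ζ)∘ρ = κ. -/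
open TensorProduct

universe u

section SuperDefs

variable (K : Type u) [Field K]

/-- A ℤ₂-decomposition of a `K`-module. -/
def IsZ2Decomp {A : Type*} [AddCommGroup A] [Module K A]
    (𝒜 : ZMod 2 → Submodule K A) : Prop :=
  𝒜 0 ⊔ 𝒜 1 = ⊤ ∧ 𝒜 0 ⊓ 𝒜 1 = ⊥

/-- A ℤ₂-grading on a `K`-algebra. -/
def IsZ2Grading {A : Type*} [Ring A] [Algebra K A]
    (𝒜 : ZMod 2 → Submodule K A) : Prop :=
  IsZ2Decomp K 𝒜 ∧ (1 : A) ∈ 𝒜 0 ∧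
    ∀ i j : ZMod 2, ∀ a ∈ 𝒜 i, ∀ b ∈ 𝒜 j, a * b ∈ 𝒜 (i + j)

/-- Homogeneous elements supercommute. -/
def IsSupercommutative {A : Type*} [Ring A] [Algebra K A]
    (𝒜 : ZMod 2 → Submodule K A) : Prop :=
  ∀ i j : ZMod 2, ∀ a ∈ 𝒜 i, ∀ b ∈ 𝒜 j,
    a * b = (-1 : K) ^ (i.val * j.val) • (b * a)

/-- The super (ℤ₂-) grading on a tensor product. -/
def superTensorGrading {A Ξ : Type*} [AddCommGroup A] [Module K A]
    [AddCommGroup Ξ] [Module K Ξ]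
    (𝒜 : ZMod 2 → Submodule K A) (𝒳 : ZMod 2 → Submodule K Ξ)
    (k : ZMod 2) : Submodule K (A ⊗[K] Ξ) :=
  LinearMap.range (TensorProduct.map (𝒜 0).subtype (𝒳 k).subtype) ⊔
    LinearMap.range (TensorProduct.map (𝒜 1).subtype (𝒳 (k + 1)).subtype)

/-- A graded homomorphism of ℤ₂-graded algebras. -/
def IsGradedHom {B C : Type*} [Ring B] [Algebra K B] [Ring C] [Algebra K C]
    (ℬ : ZMod 2 → Submodule K B) (𝒞 : ZMod 2 → Submodule K C)
    (f : B →ₐ[K] C) : Prop :=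
  ∀ k : ZMod 2, ∀ b ∈ ℬ k, f b ∈ 𝒞 k

/-- A graded (homogeneous) subspace. -/
def IsGradedSubmodule {A : Type*} [AddCommGroup A] [Module K A]
    (𝒜 : ZMod 2 → Submodule K A) (W : Submodule K A) : Prop :=
  W = (W ⊓ 𝒜 0) ⊔ (W ⊓ 𝒜 1)

/-- A graded (homogeneous) subalgebra. -/
def IsGradedSubalgebra {A : Type*} [Ring A] [Algebra K A]
    (𝒜 : ZMod 2 → Submodule K A) (S : Subalgebra K A) : Prop :=
  IsGradedSubmodule K 𝒜 (Subalgebra.toSubmodule S)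

/-- A `K`-subspace which is a two-sided ideal. -/
def IsTwoSidedSubmodule {A : Type*} [Ring A] [Algebra K A]
    (I : Submodule K A) : Prop :=
  ∀ a : A, ∀ x ∈ I, a * x ∈ I ∧ x * a ∈ I

/-- Graded-simplicity: no nonzero proper graded two-sided ideals. -/
def IsGradedSimple {A : Type*} [Ring A] [Algebra K A]
    (𝒜 : ZMod 2 → Submodule K A) : Prop :=
  ∀ I : Submodule K A, IsTwoSidedSubmodule K I → IsGradedSubmodule K 𝒜 I →
    I = ⊥ ∨ I = ⊤

/-- A supercommutative `K`-algebra (algebra of superscalars). -/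
structure SuperAlg : Type (u + 1) where
  carrier : Type u
  [ring : Ring carrier]
  [alg : Algebra K carrier]
  grading : ZMod 2 → Submodule K carrier
  isGrading : IsZ2Grading K grading
  isSupercomm : IsSupercommutative K grading

attribute [instance] SuperAlg.ring SuperAlg.alg

/-- `ρ(B) ⊆ A ⊗ S` for a subalgebra `S` of `Ξ`. -/
def MapsIntoTensorSub {A B Ξ : Type u} [Ring A] [Algebra K A] [Ring B] [Algebra K B]
    [Ring Ξ] [Algebra K Ξ] (ρ : B →ₐ[K] A ⊗[K] Ξ) (S : Subalgebra K Ξ) : Prop :=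
  ∀ b : B, ρ b ∈ LinearMap.range
    (TensorProduct.map (LinearMap.id : A →ₗ[K] A) (Subalgebra.toSubmodule S).subtype)

/-- `(Ξ, ρ)` is an `A`-universal supermap for `B`. -/
def IsUniversalSupermap {A : Type u} [Ring A] [Algebra K A]
    (𝒜 : ZMod 2 → Submodule K A)
    {B : Type u} [Ring B] [Algebra K B] (ℬ : ZMod 2 → Submodule K B)
    (Ξ : SuperAlg K) (ρ : B →ₐ[K] A ⊗[K] Ξ.carrier) : Prop :=
  IsGradedHom K ℬ (superTensorGrading K 𝒜 Ξ.grading) ρ ∧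
  (∀ S : Subalgebra K Ξ.carrier, IsGradedSubalgebra K Ξ.grading S →
      MapsIntoTensorSub K ρ S → S = ⊤) ∧
  ∀ (F : SuperAlg K) (κ : B →ₐ[K] A ⊗[K] F.carrier),
    IsGradedHom K ℬ (superTensorGrading K 𝒜 F.grading) κ →
    ∃ ζ : Ξ.carrier →ₐ[K] F.carrier, IsGradedHom K Ξ.grading F.grading ζ ∧
      (Algebra.TensorProduct.map (AlgHom.id K A) ζ).comp ρ = κ

end SuperDefs

section Helpers

variable {K : Type u} [Field K]

lemma zmod2_cases (k : ZMod 2) : k = 0 ∨ k = 1 := by revert k; decide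

lemma exists_homog_basis {A : Type u} [Ring A] [Algebra K A] [FiniteDimensional K A]
    (𝒜 : ZMod 2 → Submodule K A) (h : IsZ2Decomp K 𝒜) :
    ∃ (ι : Type) (_ : Fintype ι) (a : Module.Basis ι K A) (p : ι → ZMod 2),
      (∀ i, a i ∈ 𝒜 (p i)) ∧ ∀ i j x, x ∈ 𝒜 j → p i ≠ j → a.coord i x = 0 := by
  have hc : IsCompl (𝒜 0) (𝒜 1) :=
    ⟨disjoint_iff.2 h.2, codisjoint_iff.2 h.1⟩
  let e := Submodule.prodEquivOfIsCompl _ _ hc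
  let a := ((Module.finBasis K (𝒜 0)).prod (Module.finBasis K (𝒜 1))).map e
  refine ⟨_, inferInstance, a, Sum.elim (fun _ => 0) (fun _ => 1), ?_, ?_⟩
  · rintro (i | i)
    · simp [a, e]
    · simp [a, e]
  · intro i j x hx hij
    have hj : j = 0 ∨ j = 1 := zmod2_cases j
    rcases hj with rfl | rfl
    · rcases i with i | i
      · simp at hij
      · have : e.symm x = (⟨x, hx⟩, 0) := by
          rw [LinearEquiv.symm_apply_eq]; simp [e]
        simp [a, this]
    · rcases i with i | i
      · have : e.symm x = (0, ⟨x, hx⟩) := by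
          rw [LinearEquiv.symm_apply_eq]; simp [e]
        simp [a, this]
      · simp at hij

/-- Coefficient of a tensor with respect to a basis of the left factor. -/
noncomputable def tcoef {A : Type u} [AddCommGroup A] [Module K A] {ι : Type}
    (a : Module.Basis ι K A) (F : Type u) [AddCommGroup F] [Module K F] (i : ι) :
    A ⊗[K] F →ₗ[K] F :=
  (TensorProduct.lid K F).toLinearMap ∘ₗ LinearMap.rTensor F (a.coord i)

lemma tcoef_tmul {A : Type u} [AddCommGroup A] [Module K A] {ι : Type}
    (a : Module.Basis ι K A) (F : Type u) [AddCommGroup F] [Module K F] (i : ι) (x : A) (f : F) :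
    tcoef a F i (x ⊗ₜ f) = a.coord i x • f := by
  simp [tcoef]

lemma tcoef_sum {A : Type u} [AddCommGroup A] [Module K A] {ι : Type} [Fintype ι]
    (a : Module.Basis ι K A) (F : Type u) [AddCommGroup F] [Module K F] (t : A ⊗[K] F) :
    ∑ i, a i ⊗ₜ[K] tcoef a F i t = t := by
  induction t with
  | zero => simp
  | add x y hx hy => simp [tmul_add, Finset.sum_add_distrib, hx, hy]
  | tmul x f =>
    simp only [tcoef_tmul, ← smul_tmul, ← sum_tmul]
    congr 1
    exact a.sum_repr x

lemma tcoef_map {A : Type u} [Ring A] [Algebra K A] {ι : Type}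
    (a : Module.Basis ι K A) {F G : Type u} [Ring F] [Algebra K F] [Ring G] [Algebra K G]
    (ζ : F →ₐ[K] G) (i : ι) (t : A ⊗[K] F) :
    tcoef a G i (Algebra.TensorProduct.map (AlgHom.id K A) ζ t) = ζ (tcoef a F i t) := by
  induction t with
  | zero => simp
  | add x y hx hy => simp [hx, hy]
  | tmul x f => simp [tcoef_tmul]

lemma tcoef_mem {A : Type u} [AddCommGroup A] [Module K A] {ι : Type}
    (a : Module.Basis ι K A) (p : ι → ZMod 2) (𝒜 : ZMod 2 → Submodule K A)
    (hp : ∀ i j x, x ∈ 𝒜 j → p i ≠ j → a.coord i x = 0)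
    {F : Type u} [AddCommGroup F] [Module K F] (ℱ : ZMod 2 → Submodule K F)
    (k : ZMod 2) (t : A ⊗[K] F) (ht : t ∈ superTensorGrading K 𝒜 ℱ k) (i : ι) :
    tcoef a F i t ∈ ℱ (k + p i) := by
  have key : superTensorGrading K 𝒜 ℱ k ≤ (ℱ (k + p i)).comap (tcoef a F i) := by
    refine sup_le ?_ ?_
    · rintro _ ⟨s, rfl⟩
      induction s with
      | zero => simp
      | add x y hx hy => rw [map_add]; exact Submodule.add_mem _ hx hy
      | tmul x f =>
        simp only [map_tmul, Submodule.subtype_apply, Submodule.mem_comap, tcoef_tmul]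
        by_cases h : p i = 0
        · rw [h, add_zero]; exact Submodule.smul_mem _ _ f.2
        · rw [hp i 0 x x.2 h, zero_smul]; exact Submodule.zero_mem _
    · rintro _ ⟨s, rfl⟩
      induction s with
      | zero => simp
      | add x y hx hy => rw [map_add]; exact Submodule.add_mem _ hx hy
      | tmul x f =>
        simp only [map_tmul, Submodule.subtype_apply, Submodule.mem_comap, tcoef_tmul]
        by_cases h : p i = 1
        · rw [h]; exact Submodule.smul_mem _ _ f.2
        · rw [hp i 1 x x.2 h, zero_smul]; exact Submodule.zero_mem _
  exact key ht

lemma mem_superTensorGrading {A : Type u} [AddCommGroup A] [Module K A]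
    (𝒜 : ZMod 2 → Submodule K A) {F : Type u} [AddCommGroup F] [Module K F]
    (ℱ : ZMod 2 → Submodule K F) (k j : ZMod 2) (x : A) (f : F)
    (hx : x ∈ 𝒜 j) (hf : f ∈ ℱ (k + j)) : x ⊗ₜ[K] f ∈ superTensorGrading K 𝒜 ℱ k := by
  rcases zmod2_cases j with rfl | rfl
  · rw [add_zero] at hf
    exact Submodule.mem_sup_left ⟨(⟨x, hx⟩ : 𝒜 0) ⊗ₜ (⟨f, hf⟩ : ℱ k), rfl⟩
  · exact Submodule.mem_sup_right ⟨(⟨x, hx⟩ : 𝒜 1) ⊗ₜ (⟨f, hf⟩ : ℱ (k + 1)), rfl⟩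

/-- A graded homomorphism from `B` to `A ⊗ F` for some supercommutative `F`. -/
structure SPoint {A : Type u} [Ring A] [Algebra K A] (𝒜 : ZMod 2 → Submodule K A)
    {B : Type u} [Ring B] [Algebra K B] (ℬ : ZMod 2 → Submodule K B) : Type (u + 1) where
  F : SuperAlg K
  κ : B →ₐ[K] A ⊗[K] F.carrier
  h : IsGradedHom K ℬ (superTensorGrading K 𝒜 F.grading) κ

variable {A : Type u} [Ring A] [Algebra K A] {𝒜 : ZMod 2 → Submodule K A}
    {B : Type u} [Ring B] [Algebra K B] {ℬ : ZMod 2 → Submodule K B}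
    {ι : Type} (a : Module.Basis ι K A)

/-- Evaluation of the free algebra at a point. -/
noncomputable def SPoint.ev (P : SPoint (K := K) 𝒜 ℬ) : FreeAlgebra K (ι × B) →ₐ[K] P.F.carrier :=
  FreeAlgebra.lift K fun x => tcoef a P.F.carrier x.1 (P.κ x.2)

/-- Two elements agree at all points. -/
def SRel (𝒜 : ZMod 2 → Submodule K A) (ℬ : ZMod 2 → Submodule K B)
    (x y : FreeAlgebra K (ι × B)) : Prop :=
  ∀ P : SPoint (K := K) 𝒜 ℬ, P.ev a x = P.ev a y

/-- The universal algebra. -/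
abbrev SXi (𝒜 : ZMod 2 → Submodule K A) (ℬ : ZMod 2 → Submodule K B) : Type u :=
  RingQuot (SRel a 𝒜 ℬ)

/-- Evaluation of the universal algebra at a point. -/
noncomputable def SPoint.z (P : SPoint (K := K) 𝒜 ℬ) : SXi a 𝒜 ℬ →ₐ[K] P.F.carrier :=
  RingQuot.liftAlgHom K ⟨P.ev a, fun _ _ h => h P⟩

/-- Generators. -/
noncomputable def sgen (𝒜 : ZMod 2 → Submodule K A) (ℬ : ZMod 2 → Submodule K B)
    (i : ι) (b : B) : SXi a 𝒜 ℬ :=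
  RingQuot.mkAlgHom K (SRel a 𝒜 ℬ) (FreeAlgebra.ι K (i, b))

lemma z_mk (P : SPoint (K := K) 𝒜 ℬ) (x) :
    P.z a (RingQuot.mkAlgHom K (SRel a 𝒜 ℬ) x) = P.ev a x := by
  simp [SPoint.z]

lemma z_sgen (P : SPoint (K := K) 𝒜 ℬ) (i : ι) (b : B) :
    P.z a (sgen a 𝒜 ℬ i b) = tcoef a P.F.carrier i (P.κ b) := by
  rw [sgen, z_mk]; simp [SPoint.ev]

lemma sxi_ext (x y : SXi a 𝒜 ℬ) (h : ∀ P : SPoint (K := K) 𝒜 ℬ, P.z a x = P.z a y) : x = y := by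
  obtain ⟨x, rfl⟩ := RingQuot.mkAlgHom_surjective K _ x
  obtain ⟨y, rfl⟩ := RingQuot.mkAlgHom_surjective K _ y
  refine RingQuot.mkAlgHom_rel K fun P => ?_
  rw [← z_mk, ← z_mk, h P]

lemma sxi_gen (S : Subalgebra K (SXi a 𝒜 ℬ)) (h : ∀ i b, sgen a 𝒜 ℬ i b ∈ S) : S = ⊤ := by
  rw [eq_top_iff]
  rintro x -
  obtain ⟨x, rfl⟩ := RingQuot.mkAlgHom_surjective K _ x
  induction x using FreeAlgebra.induction with
  | grade0 r => rw [AlgHom.commutes]; exact S.algebraMap_mem r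
  | grade1 x => exact h x.1 x.2
  | mul x y hx hy => rw [map_mul]; exact S.mul_mem hx hy
  | add x y hx hy => rw [map_add]; exact S.add_mem hx hy

/-- The grading. -/
noncomputable def sgrad (𝒜 : ZMod 2 → Submodule K A) (ℬ : ZMod 2 → Submodule K B) (k : ZMod 2) :
    Submodule K (SXi a 𝒜 ℬ) :=
  ⨅ P : SPoint (K := K) 𝒜 ℬ, (P.F.grading k).comap (P.z a).toLinearMap

lemma mem_sgrad (k : ZMod 2) (x : SXi a 𝒜 ℬ) :
    x ∈ sgrad a 𝒜 ℬ k ↔ ∀ P : SPoint (K := K) 𝒜 ℬ, P.z a x ∈ P.F.grading k := by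
  simp [sgrad]

lemma sgen_mem (p : ι → ZMod 2)
    (hp : ∀ i j x, x ∈ 𝒜 j → p i ≠ j → a.coord i x = 0) (k : ZMod 2) (b : B) (hb : b ∈ ℬ k)
    (i : ι) : sgen a 𝒜 ℬ i b ∈ sgrad a 𝒜 ℬ (k + p i) := by
  rw [mem_sgrad]
  intro P
  rw [z_sgen]
  exact tcoef_mem a p 𝒜 hp _ k _ (P.h k b hb) i

lemma sgrad_mul (i j : ZMod 2) (x : SXi a 𝒜 ℬ) (hx : x ∈ sgrad a 𝒜 ℬ i) (y : SXi a 𝒜 ℬ)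
    (hy : y ∈ sgrad a 𝒜 ℬ j) : x * y ∈ sgrad a 𝒜 ℬ (i + j) := by
  rw [mem_sgrad] at *
  intro P
  rw [map_mul]
  exact P.F.isGrading.2.2 i j _ (hx P) _ (hy P)

lemma sgrad_one : (1 : SXi a 𝒜 ℬ) ∈ sgrad a 𝒜 ℬ 0 := by
  rw [mem_sgrad]; intro P; rw [map_one]; exact P.F.isGrading.2.1

lemma mem_sup_of (k : ZMod 2) (x : SXi a 𝒜 ℬ) (h : x ∈ sgrad a 𝒜 ℬ k) :
    x ∈ sgrad a 𝒜 ℬ 0 ⊔ sgrad a 𝒜 ℬ 1 := by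
  rcases zmod2_cases k with rfl | rfl
  · exact Submodule.mem_sup_left h
  · exact Submodule.mem_sup_right h

lemma sgrad_top (hℬ : IsZ2Decomp K ℬ) (p : ι → ZMod 2)
    (hp : ∀ i j x, x ∈ 𝒜 j → p i ≠ j → a.coord i x = 0) :
    sgrad a 𝒜 ℬ 0 ⊔ sgrad a 𝒜 ℬ 1 = ⊤ := by
  let S : Subalgebra K (SXi a 𝒜 ℬ) := Submodule.toSubalgebra (sgrad a 𝒜 ℬ 0 ⊔ sgrad a 𝒜 ℬ 1)
    (Submodule.mem_sup_left (sgrad_one a)) (by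
      intro x y hx hy
      obtain ⟨x0, hx0, x1, hx1, rfl⟩ := Submodule.mem_sup.1 hx
      obtain ⟨y0, hy0, y1, hy1, rfl⟩ := Submodule.mem_sup.1 hy
      rw [add_mul, mul_add, mul_add]
      exact Submodule.add_mem _
        (Submodule.add_mem _ (mem_sup_of a _ _ (sgrad_mul a _ _ _ hx0 _ hy0))
          (mem_sup_of a _ _ (sgrad_mul a _ _ _ hx0 _ hy1)))
        (Submodule.add_mem _ (mem_sup_of a _ _ (sgrad_mul a _ _ _ hx1 _ hy0))
          (mem_sup_of a _ _ (sgrad_mul a _ _ _ hx1 _ hy1))))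
  have hS : S = ⊤ := by
    apply sxi_gen
    intro i b
    have hb : b ∈ ℬ 0 ⊔ ℬ 1 := by rw [hℬ.1]; trivial
    obtain ⟨b0, h0, b1, h1, rfl⟩ := Submodule.mem_sup.1 hb
    have : sgen a 𝒜 ℬ i (b0 + b1) = sgen a 𝒜 ℬ i b0 + sgen a 𝒜 ℬ i b1 := by
      apply sxi_ext
      intro P
      simp [z_sgen]
    rw [this]
    exact S.add_mem (mem_sup_of a _ _ (sgen_mem a p hp 0 _ h0 i))
      (mem_sup_of a _ _ (sgen_mem a p hp 1 _ h1 i))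
  rw [eq_top_iff]
  rintro x -
  have : x ∈ S := by rw [hS]; trivial
  exact this

/-- The universal superalgebra. -/
noncomputable def sXi (hℬ : IsZ2Decomp K ℬ) (p : ι → ZMod 2)
    (hp : ∀ i j x, x ∈ 𝒜 j → p i ≠ j → a.coord i x = 0) : SuperAlg K where
  carrier := SXi a 𝒜 ℬ
  grading := sgrad a 𝒜 ℬ
  isGrading := by
    refine ⟨⟨sgrad_top a hℬ p hp, ?_⟩, sgrad_one a, sgrad_mul a⟩
    rw [eq_bot_iff]
    rintro x ⟨h0, h1⟩
    rw [SetLike.mem_coe, mem_sgrad] at h0 h1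
    rw [Submodule.mem_bot]
    apply sxi_ext
    intro P
    have : P.z a x ∈ P.F.grading 0 ⊓ P.F.grading 1 := ⟨h0 P, h1 P⟩
    rw [P.F.isGrading.1.2, Submodule.mem_bot] at this
    rw [this, map_zero]
  isSupercomm := by
    intro i j x hx y hy
    rw [mem_sgrad] at hx hy
    apply sxi_ext
    intro P
    rw [map_smul, map_mul, map_mul]
    exact P.F.isSupercomm i j _ (hx P) _ (hy P)

lemma tens_ext [Fintype ι] (s t : A ⊗[K] SXi a 𝒜 ℬ)
    (h : ∀ P : SPoint (K := K) 𝒜 ℬ, Algebra.TensorProduct.map (AlgHom.id K A) (P.z a) s =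
      Algebra.TensorProduct.map (AlgHom.id K A) (P.z a) t) : s = t := by
  rw [← tcoef_sum a _ s, ← tcoef_sum a _ t]
  refine Finset.sum_congr rfl fun i _ => ?_
  congr 1
  apply sxi_ext
  intro P
  rw [← tcoef_map, ← tcoef_map, h P]

/-- The universal map, as a function. -/
noncomputable def srho0 [Fintype ι] (𝒜 : ZMod 2 → Submodule K A) (ℬ : ZMod 2 → Submodule K B)
    (b : B) : A ⊗[K] SXi a 𝒜 ℬ := ∑ i, a i ⊗ₜ[K] sgen a 𝒜 ℬ i b

lemma map_srho0 [Fintype ι] (P : SPoint (K := K) 𝒜 ℬ) (b : B) :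
    Algebra.TensorProduct.map (AlgHom.id K A) (P.z a) (srho0 a 𝒜 ℬ b) = P.κ b := by
  rw [srho0, map_sum]
  simp only [Algebra.TensorProduct.map_tmul, AlgHom.id_apply, z_sgen]
  exact tcoef_sum a _ _

/-- The universal map. -/
noncomputable def srho [Fintype ι] (𝒜 : ZMod 2 → Submodule K A) (ℬ : ZMod 2 → Submodule K B) :
    B →ₐ[K] A ⊗[K] SXi a 𝒜 ℬ where
  toFun := srho0 a 𝒜 ℬ
  map_one' := tens_ext a _ _ fun P => by rw [map_srho0, map_one, map_one]
  map_mul' x y := tens_ext a _ _ fun P => by simp only [map_srho0, map_mul]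
  map_zero' := tens_ext a _ _ fun P => by rw [map_srho0, map_zero, map_zero]
  map_add' x y := tens_ext a _ _ fun P => by simp only [map_srho0, map_add]
  commutes' r := tens_ext a _ _ fun P => by rw [map_srho0, AlgHom.commutes, AlgHom.commutes]

lemma tcoef_srho [Fintype ι] (i : ι) (b : B) :
    tcoef a _ i (srho a 𝒜 ℬ b) = sgen a 𝒜 ℬ i b := by
  apply sxi_ext
  intro P
  rw [← tcoef_map, z_sgen]
  congr 1
  exact map_srho0 a P b

end Helpers

/-- Existence of the `A`-universal supermap for any ℤ₂-graded algebra `B`,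
where `A` is a finite-dimensional graded-simple central ℤ₂-graded algebra over a field of
characteristic zero. -/
theorem exists_universal_supermap
    {K : Type u} [Field K] [CharZero K]
    {A : Type u} [Ring A] [Algebra K A] [FiniteDimensional K A]
    (𝒜 : ZMod 2 → Submodule K A) (h𝒜 : IsZ2Grading K 𝒜)
    (hsimple : IsGradedSimple K 𝒜)
    (hcentral : Subalgebra.center K A = ⊥)
    {B : Type u} [Ring B] [Algebra K B]
    (ℬ : ZMod 2 → Submodule K B) (hℬ : IsZ2Grading K ℬ) :
    ∃ (Ξ : SuperAlg K) (ρ : B →ₐ[K] A ⊗[K] Ξ.carrier),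
      IsUniversalSupermap K 𝒜 ℬ Ξ ρ := by
  obtain ⟨ι, _, a, p, hap, hp⟩ := exists_homog_basis 𝒜 h𝒜.1
  refine ⟨sXi a hℬ.1 p hp, srho a 𝒜 ℬ, ?_, ?_, ?_⟩
  · intro k b hb
    refine Submodule.sum_mem _ fun i _ => ?_
    exact mem_superTensorGrading 𝒜 _ k (p i) _ _ (hap i) (sgen_mem a p hp k b hb i)
  · intro S _ hS
    refine sxi_gen a S fun i b => ?_
    obtain ⟨s, hs⟩ := hS b
    have key : ∀ s : A ⊗[K] (Subalgebra.toSubmodule S), tcoef a _ i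
        (TensorProduct.map (LinearMap.id : A →ₗ[K] A) (Subalgebra.toSubmodule S).subtype s) ∈
          Subalgebra.toSubmodule S := by
      intro s
      induction s with
      | zero => simp
      | add x y hx hy => rw [map_add, map_add]; exact Submodule.add_mem _ hx hy
      | tmul x f =>
        rw [map_tmul, tcoef_tmul]
        exact Submodule.smul_mem _ _ f.2
    have h2 := key s
    rw [hs] at h2
    have h3 := tcoef_srho (𝒜 := 𝒜) (ℬ := ℬ) a i b
    rw [← h3]
    exact h2
  · intro F κ hκ
    let P : SPoint (K := K) 𝒜 ℬ := ⟨F, κ, hκ⟩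
    refine ⟨P.z a, fun k x hx => (mem_sgrad a k x).1 hx P, ?_⟩
    ext b
    exact map_srho0 a P b
end

section
/- Let K be a field of characteristic 0, A a finite-dimensional ℤ₂-graded associative unital K-algebra, B a ℤ₂-graded associative unital K-algebra, and let ρ: B → A⊗Ξ be a graded homomorphism into A tensored with a supercommutative K-algebra Ξ such that the only graded unital K-subalgebra Ξ' of Ξ with ρ(B) ⊆ A⊗Ξ' is Ξ' = Ξ. If F is a supercommutative K-algebra, κ: B → A⊗F is a graded homomorphism, and ζ, ζ': Ξ → F are graded homomorphisms with (id_A⊗ζ)∘ρ = κ = (id_A⊗ζ')∘ρ, then ζ = ζ'. -/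
open TensorProduct

universe u

/-- Uniqueness of the compatible map `ζ`: if the entries of `ρ(B)` generate `Ξ`
(i.e. the only graded subalgebra `Ξ'` of `Ξ` with `ρ(B) ⊆ A ⊗ Ξ'` is `Ξ` itself), then a graded
homomorphism `ζ : Ξ → F` with `(id_A ⊗ ζ) ∘ ρ = κ` is uniquely determined. -/
theorem universal_supermap_zeta_unique
    {K : Type u} [Field K] [CharZero K]
    {A : Type u} [Ring A] [Algebra K A] [FiniteDimensional K A]
    (𝒜 : ZMod 2 → Submodule K A) (h𝒜 : IsZ2Grading K 𝒜)
    {B : Type u} [Ring B] [Algebra K B]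
    (ℬ : ZMod 2 → Submodule K B) (hℬ : IsZ2Grading K ℬ)
    (Ξ : SuperAlg K) (ρ : B →ₐ[K] A ⊗[K] Ξ.carrier)
    (hρ : IsGradedHom K ℬ (superTensorGrading K 𝒜 Ξ.grading) ρ)
    (hgen : ∀ S : Subalgebra K Ξ.carrier, IsGradedSubalgebra K Ξ.grading S →
      MapsIntoTensorSub K ρ S → S = ⊤)
    (F : SuperAlg K) (κ : B →ₐ[K] A ⊗[K] F.carrier)
    (hκ : IsGradedHom K ℬ (superTensorGrading K 𝒜 F.grading) κ)
    (ζ ζ' : Ξ.carrier →ₐ[K] F.carrier)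
    (hζ : IsGradedHom K Ξ.grading F.grading ζ)
    (hζ' : IsGradedHom K Ξ.grading F.grading ζ')
    (h1 : (Algebra.TensorProduct.map (AlgHom.id K A) ζ).comp ρ = κ)
    (h2 : (Algebra.TensorProduct.map (AlgHom.id K A) ζ').comp ρ = κ) :
    ζ = ζ' := by
  have hS : AlgHom.equalizer ζ ζ' = ⊤ := by
    apply hgen
    · unfold IsGradedSubalgebra IsGradedSubmodule
      apply le_antisymm
      · intro x hx
        have hx' : ζ x = ζ' x := hx
        have hxt : x ∈ Ξ.grading 0 ⊔ Ξ.grading 1 := by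
          rw [Ξ.isGrading.1.1]; trivial
        obtain ⟨y, hy, z, hz, rfl⟩ := Submodule.mem_sup.1 hxt
        have e : ζ y - ζ' y = ζ' z - ζ z := by
          rw [map_add, map_add] at hx'
          rw [sub_eq_sub_iff_add_eq_add, hx', add_comm]
        have h0 : ζ y - ζ' y ∈ F.grading 0 ⊓ F.grading 1 := by
          refine ⟨Submodule.sub_mem _ (hζ 0 y hy) (hζ' 0 y hy), ?_⟩
          rw [e]
          exact Submodule.sub_mem _ (hζ' 1 z hz) (hζ 1 z hz)
        rw [F.isGrading.1.2, Submodule.mem_bot] at h0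
        have hy' : ζ y = ζ' y := sub_eq_zero.1 h0
        have hz' : ζ z = ζ' z := by
          rw [h0] at e
          exact (sub_eq_zero.1 e.symm).symm
        exact Submodule.add_mem_sup ⟨hy', hy⟩ ⟨hz', hz⟩
      · exact sup_le inf_le_left inf_le_left
    · intro b
      have hex : Function.Exact
          (Subalgebra.toSubmodule (AlgHom.equalizer ζ ζ')).subtype
          (ζ.toLinearMap - ζ'.toLinearMap) := by
        intro x
        constructor
        · intro h
          exact ⟨⟨x, sub_eq_zero.1 h⟩, rfl⟩
        · rintro ⟨⟨y, hy⟩, rfl⟩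
          exact sub_eq_zero.2 hy
      have hex2 := Module.Flat.lTensor_exact A hex
      refine (hex2 (ρ b)).1 ?_
      rw [LinearMap.lTensor_sub, LinearMap.sub_apply, sub_eq_zero]
      exact DFunLike.congr_fun (h1.trans h2.symm) b
  ext x
  have hx : x ∈ AlgHom.equalizer ζ ζ' := by rw [hS]; trivial
  exact hx
end

section
/- Let K be a field of characteristic 0 and let S and T be sets. Let R be the quotient of the free associative unital K-algebra on the disjoint union S ⊔ T by the two-sided ideal generated by all elements ss' − s's, st − ts, and tt' + t't, for s, s' ∈ S and t, t' ∈ T. Then R is isomorphic as a K-algebra to the tensor product of the polynomial algebra K[S] on the set of variables S with the exterior algebra Λ(V) of the free K-vector space V with basis T. In particular, the free supercommutative K-algebra on even generators S and odd generators T is isomorphic to K[S] ⊗ Λ(V). -/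
open TensorProduct

universe u

/-- The supercommutativity relations on the free associative algebra on `S ⊕ T`:
`ss' = s's`, `st = ts` and `tt' = -(t't)` (equivalently `tt' + t't = 0`), which present the
quotient by the two-sided ideal generated by `ss' − s's`, `st − ts`, `tt' + t't`. -/
inductive SupercommRel (K : Type u) [Field K] (S T : Type u) :
    FreeAlgebra K (S ⊕ T) → FreeAlgebra K (S ⊕ T) → Prop
  | comm_ss (s s' : S) :
      SupercommRel K S T
        (FreeAlgebra.ι K (Sum.inl s) * FreeAlgebra.ι K (Sum.inl s'))
        (FreeAlgebra.ι K (Sum.inl s') * FreeAlgebra.ι K (Sum.inl s))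
  | comm_st (s : S) (t : T) :
      SupercommRel K S T
        (FreeAlgebra.ι K (Sum.inl s) * FreeAlgebra.ι K (Sum.inr t))
        (FreeAlgebra.ι K (Sum.inr t) * FreeAlgebra.ι K (Sum.inl s))
  | anticomm_tt (t t' : T) :
      SupercommRel K S T
        (FreeAlgebra.ι K (Sum.inr t) * FreeAlgebra.ι K (Sum.inr t'))
        (-(FreeAlgebra.ι K (Sum.inr t') * FreeAlgebra.ι K (Sum.inr t)))

namespace SupercommAux

variable (K : Type u) [Field K] (S T : Type u)

noncomputable def x (i : S ⊕ T) : RingQuot (SupercommRel K S T) :=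
  RingQuot.mkAlgHom K (SupercommRel K S T) (FreeAlgebra.ι K i)

theorem x_ss (s s' : S) :
    x K S T (Sum.inl s) * x K S T (Sum.inl s') = x K S T (Sum.inl s') * x K S T (Sum.inl s) := by
  simp only [x, ← map_mul]
  exact RingQuot.mkAlgHom_rel K (SupercommRel.comm_ss s s')

theorem x_st (s : S) (t : T) :
    x K S T (Sum.inl s) * x K S T (Sum.inr t) = x K S T (Sum.inr t) * x K S T (Sum.inl s) := by
  simp only [x, ← map_mul]
  exact RingQuot.mkAlgHom_rel K (SupercommRel.comm_st s t)

theorem x_tt (t t' : T) :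
    x K S T (Sum.inr t) * x K S T (Sum.inr t') =
      -(x K S T (Sum.inr t') * x K S T (Sum.inr t)) := by
  simp only [x, ← map_mul, ← map_neg]
  exact RingQuot.mkAlgHom_rel K (SupercommRel.anticomm_tt t t')

/-- Polynomial part of the inverse map. -/
theorem exists_poly : ∃ f : MvPolynomial S K →ₐ[K] RingQuot (SupercommRel K S T),
    ∀ s, f (MvPolynomial.X s) = x K S T (Sum.inl s) := by
  letI := Algebra.adjoinCommRingOfComm K
    (s := Set.range fun s : S => x K S T (Sum.inl s)) (by
      rintro _ ⟨a, rfl⟩ _ ⟨b, rfl⟩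
      exact x_ss K S T a b)
  let A := Algebra.adjoin K (Set.range fun s : S => x K S T (Sum.inl s))
  refine ⟨A.val.comp (MvPolynomial.aeval (R := K) (S₁ := A)
    fun s => ⟨x K S T (Sum.inl s), Algebra.subset_adjoin ⟨s, rfl⟩⟩), fun s => ?_⟩
  rw [AlgHom.comp_apply, MvPolynomial.aeval_X]
  rfl

noncomputable def lin : (T →₀ K) →ₗ[K] RingQuot (SupercommRel K S T) :=
  Finsupp.linearCombination K fun t => x K S T (Sum.inr t)

theorem lin_anti (m n : T →₀ K) : lin K S T m * lin K S T n = -(lin K S T n * lin K S T m) := by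
  induction m using Finsupp.induction_linear with
  | zero => simp
  | add a b ha hb => rw [map_add, add_mul, mul_add, ha, hb, neg_add]
  | single t c =>
    induction n using Finsupp.induction_linear with
    | zero => simp
    | add a b ha hb => rw [map_add, add_mul, mul_add, ha, hb, neg_add]
    | single t' c' =>
      simp only [lin, Finsupp.linearCombination_single, smul_mul_smul_comm]
      rw [x_tt, mul_comm c, smul_neg]

theorem lin_sq [CharZero K] (m : T →₀ K) : lin K S T m * lin K S T m = 0 := by
  have h := lin_anti K S T m m
  have h2 : (2 : K) • (lin K S T m * lin K S T m) = 0 := by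
    rw [two_smul]
    nth_rewrite 1 [h]
    simp
  exact (smul_eq_zero.mp h2).resolve_left two_ne_zero

noncomputable def ext [CharZero K] :
    ExteriorAlgebra K (T →₀ K) →ₐ[K] RingQuot (SupercommRel K S T) :=
  ExteriorAlgebra.lift K ⟨lin K S T, lin_sq K S T⟩

theorem ext_ι [CharZero K] (m : T →₀ K) :
    ext K S T (ExteriorAlgebra.ι K m) = lin K S T m := by
  simp [ext]

theorem comm_lin (s : S) (m : T →₀ K) : Commute (x K S T (Sum.inl s)) (lin K S T m) := by
  induction m using Finsupp.induction_linear with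
  | zero => simp
  | add a b ha hb => rw [map_add]; exact ha.add_right hb
  | single t c =>
    simp only [lin, Finsupp.linearCombination_single]
    exact Commute.smul_right (x_st K S T s t) c

theorem comm_ext [CharZero K] (s : S) (b : ExteriorAlgebra K (T →₀ K)) :
    Commute (x K S T (Sum.inl s)) (ext K S T b) := by
  induction b using ExteriorAlgebra.induction with
  | algebraMap r => rw [AlgHom.commutes]; exact Algebra.commute_algebraMap_right _ _
  | ι m => rw [ext_ι]; exact comm_lin K S T s m
  | mul a b ha hb => rw [map_mul]; exact ha.mul_right hb
  | add a b ha hb => rw [map_add]; exact ha.add_right hb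

theorem comm_all [CharZero K] (f : MvPolynomial S K →ₐ[K] RingQuot (SupercommRel K S T))
    (hf : ∀ s, f (MvPolynomial.X s) = x K S T (Sum.inl s))
    (a : MvPolynomial S K) (b : ExteriorAlgebra K (T →₀ K)) :
    Commute (f a) (ext K S T b) := by
  induction a using MvPolynomial.induction_on with
  | C r =>
    rw [← MvPolynomial.algebraMap_eq, AlgHom.commutes]
    exact Algebra.commute_algebraMap_left _ _
  | add p q hp hq => rw [map_add]; exact hp.add_left hq
  | mul_X p s hp => rw [map_mul, hf]; exact hp.mul_left (comm_ext K S T s b)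

noncomputable def gen :
    S ⊕ T → MvPolynomial S K ⊗[K] ExteriorAlgebra K (T →₀ K) :=
  Sum.elim (fun s => MvPolynomial.X s ⊗ₜ[K] 1)
    (fun t => 1 ⊗ₜ[K] ExteriorAlgebra.ι K (Finsupp.single t 1))

theorem gen_rel ⦃a b : FreeAlgebra K (S ⊕ T)⦄ (h : SupercommRel K S T a b) :
    FreeAlgebra.lift K (gen K S T) a = FreeAlgebra.lift K (gen K S T) b := by
  cases h with
  | comm_ss s s' => simp [gen, mul_comm]
  | comm_st s t => simp [gen]
  | anticomm_tt t t' =>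
    simp only [gen, map_mul, map_neg, FreeAlgebra.lift_ι_apply, Sum.elim_inr,
      Algebra.TensorProduct.tmul_mul_tmul, ← TensorProduct.tmul_neg]
    rw [eq_neg_of_add_eq_zero_left (ExteriorAlgebra.ι_add_mul_swap (R := K)
      (Finsupp.single t (1 : K)) (Finsupp.single t' 1))]

noncomputable def fwd : RingQuot (SupercommRel K S T) →ₐ[K]
    MvPolynomial S K ⊗[K] ExteriorAlgebra K (T →₀ K) :=
  RingQuot.liftAlgHom K ⟨FreeAlgebra.lift K (gen K S T), gen_rel K S T⟩

theorem fwd_x (i : S ⊕ T) : fwd K S T (x K S T i) = gen K S T i := by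
  simp [fwd, x]

end SupercommAux

/-- The free supercommutative algebra on even generators `S` and odd
generators `T` — i.e. the quotient of the free associative algebra on `S ⊔ T` by the two-sided
ideal generated by `ss' − s's`, `st − ts` and `tt' + t't` — is isomorphic, as a `K`-algebra,
to `K[S] ⊗ Λ(V)` where `V` is the free `K`-vector space with basis `T`. -/
theorem free_supercommutative_iso
    (K : Type u) [Field K] [CharZero K] (S T : Type u) :
    Nonempty
      (RingQuot (SupercommRel K S T) ≃ₐ[K]
        (MvPolynomial S K ⊗[K] ExteriorAlgebra K (T →₀ K))) := by
  obtain ⟨f, hf⟩ := SupercommAux.exists_poly K S T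
  let bwd := Algebra.TensorProduct.lift f (SupercommAux.ext K S T)
    (SupercommAux.comm_all K S T f hf)
  refine ⟨AlgEquiv.ofAlgHom (SupercommAux.fwd K S T) bwd ?_ ?_⟩
  · apply Algebra.TensorProduct.ext
    · apply MvPolynomial.algHom_ext
      intro s
      simp [bwd, hf, SupercommAux.fwd_x, SupercommAux.gen]
    · apply ExteriorAlgebra.hom_ext
      apply Finsupp.lhom_ext'
      intro t
      apply LinearMap.ext_ring
      simp [bwd, SupercommAux.ext_ι, SupercommAux.lin, SupercommAux.fwd_x, SupercommAux.gen]
  · apply RingQuot.ringQuot_ext'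
    apply FreeAlgebra.hom_ext
    funext i
    change bwd (SupercommAux.fwd K S T (SupercommAux.x K S T i)) = SupercommAux.x K S T i
    rw [SupercommAux.fwd_x]
    rcases i with s | t
    · simp [bwd, SupercommAux.gen, hf]
    · simp [bwd, SupercommAux.gen, SupercommAux.ext_ι, SupercommAux.lin]
end

section
/- Let K be a field of characteristic 0, let A be a finite-dimensional ℤ₂-graded associative unital K-algebra which is graded-simple and central (center = K·1), let B be a ℤ₂-graded associative unital K-algebra, and let (Ξ, ρ) be an A-universal supermap for B. Then for every ℤ₂-graded two-sided ideal I of B there exist a ℤ₂-graded ideal J of Ξ with A⊗J equal to the two-sided ideal of A⊗Ξ generated by ρ(I), and a graded homomorphism ρ': B/I → A⊗(Ξ/J) satisfying ρ'∘p_I = (id_A⊗p_J)∘ρ (where p_I: B → B/I and p_J: Ξ → Ξ/J are the projections), such that the pair (Ξ/J, ρ') is an A-universal supermap for B/I. -/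
open TensorProduct

universe u

section QuotDefs

variable (K : Type u) [Field K]

/-- The relation identifying elements modulo the two-sided ideal `I`. -/
def idealRel {B : Type u} [Ring B] [Algebra K B] (I : Submodule K B) :
    B → B → Prop :=
  fun a b => a - b ∈ I

/-- The induced ℤ₂-grading on the quotient `B ⧸ I` (realized as `RingQuot`). -/
noncomputable def quotGrading {B : Type u} [Ring B] [Algebra K B]
    (ℬ : ZMod 2 → Submodule K B) (I : Submodule K B) :
    ZMod 2 → Submodule K (RingQuot (idealRel K I)) :=
  fun k => (ℬ k).map (RingQuot.mkAlgHom K (idealRel K I)).toLinearMap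

/-- The two-sided ideal (as a `K`-subspace) generated by a set. -/
def twoSidedSpan {A : Type u} [Ring A] [Algebra K A] (s : Set A) : Submodule K A :=
  sInf {I : Submodule K A | IsTwoSidedSubmodule K I ∧ s ⊆ I}

/-- The subspace `A ⊗ J` of `A ⊗ Ξ`. -/
noncomputable def tensorIdeal {A Ξ : Type u} [Ring A] [Algebra K A]
    [Ring Ξ] [Algebra K Ξ] (J : Submodule K Ξ) : Submodule K (A ⊗[K] Ξ) :=
  LinearMap.range (TensorProduct.map (LinearMap.id : A →ₗ[K] A) J.subtype)

end QuotDefs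

namespace USQ

section simple
variable {K : Type u} [Field K]

theorem mem_of_graded {A : Type*} [AddCommGroup A] [Module K A] {𝒜 : ZMod 2 → Submodule K A}
    (h : IsZ2Decomp K 𝒜) {W : Submodule K A} (hW : IsGradedSubmodule K 𝒜 W) {x y : A}
    (hx : x ∈ 𝒜 0) (hy : y ∈ 𝒜 1) (hxy : x + y ∈ W) : x ∈ W ∧ y ∈ W := by
  rw [hW] at hxy
  obtain ⟨a, ha, b, hb, hab⟩ := Submodule.mem_sup.1 hxy
  have h1 : a - x ∈ 𝒜 0 ⊓ 𝒜 1 := by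
    refine ⟨sub_mem ha.2 hx, ?_⟩
    have : a - x = y - b := by
      rw [sub_eq_sub_iff_add_eq_add, hab, add_comm]
    rw [this]; exact sub_mem hy hb.2
  rw [h.2, Submodule.mem_bot, sub_eq_zero] at h1
  subst h1
  have h2 : b = y := add_left_cancel hab
  subst h2
  exact ⟨ha.1, hb.1⟩

theorem exists_sign {A : Type*} [Ring A] [Algebra K A] {𝒜 : ZMod 2 → Submodule K A}
    (h : IsZ2Grading K 𝒜) : ∃ σ : A →ₐ[K] A, (∀ a ∈ 𝒜 0, σ a = a) ∧ (∀ a ∈ 𝒜 1, σ a = -a) := by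
  have hc : IsCompl (𝒜 0) (𝒜 1) := ⟨disjoint_iff.2 h.1.2, codisjoint_iff.2 h.1.1⟩
  let s : A →ₗ[K] A := LinearMap.ofIsCompl hc (𝒜 0).subtype (-(𝒜 1).subtype)
  have h0 : ∀ a ∈ 𝒜 0, s a = a := fun a ha => by
    simpa using LinearMap.ofIsCompl_apply_left hc (φ := (𝒜 0).subtype) (ψ := -(𝒜 1).subtype) ⟨a, ha⟩
  have h1 : ∀ a ∈ 𝒜 1, s a = -a := fun a ha => by
    simpa using LinearMap.ofIsCompl_apply_right hc (φ := (𝒜 0).subtype) (ψ := -(𝒜 1).subtype) ⟨a, ha⟩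
  refine ⟨AlgHom.ofLinearMap s (h0 _ h.2.1) ?_, h0, h1⟩
  intro x y
  have hx : x ∈ 𝒜 0 ⊔ 𝒜 1 := h.1.1 ▸ trivial
  have hy : y ∈ 𝒜 0 ⊔ 𝒜 1 := h.1.1 ▸ trivial
  obtain ⟨a, ha, b, hb, rfl⟩ := Submodule.mem_sup.1 hx
  obtain ⟨c, hc, d, hd, rfl⟩ := Submodule.mem_sup.1 hy
  have e1 := h0 _ (h.2.2 0 0 a ha c hc)
  have e2 := h1 _ (h.2.2 0 1 a ha d hd)
  have e3 := h1 _ (h.2.2 1 0 b hb c hc)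
  have e4 := h0 _ (h.2.2 1 1 b hb d hd)
  simp only [mul_add, add_mul, map_add, e1, e2, e3, e4, h0 _ ha, h0 _ hc, h1 _ hb, h1 _ hd]
  noncomm_ring

theorem graded_of_sign [CharZero K] {A : Type*} [AddCommGroup A] [Module K A]
    {𝒜 : ZMod 2 → Submodule K A}
    (h : IsZ2Decomp K 𝒜) (σ : A →ₗ[K] A) (h0 : ∀ a ∈ 𝒜 0, σ a = a) (h1 : ∀ a ∈ 𝒜 1, σ a = -a)
    (W : Submodule K A) (hW : ∀ x ∈ W, σ x ∈ W) : IsGradedSubmodule K 𝒜 W := by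
  refine le_antisymm ?_ (sup_le inf_le_left inf_le_left)
  intro x hxW
  have hx : x ∈ 𝒜 0 ⊔ 𝒜 1 := h.1 ▸ trivial
  obtain ⟨a, ha, b, hb, rfl⟩ := Submodule.mem_sup.1 hx
  have hs := hW _ hxW
  rw [map_add, h0 _ ha, h1 _ hb] at hs
  have h2 : (2 : K) ≠ 0 := two_ne_zero
  have haW : a ∈ W := by
    have := W.smul_mem (2 : K)⁻¹ (W.add_mem hxW hs)
    have e : (a + b) + (a + -b) = (2 : K) • a := by rw [two_smul]; abel
    rwa [e, inv_smul_smul₀ h2] at this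
  have hbW : b ∈ W := by
    have := W.sub_mem hxW haW
    rwa [add_sub_cancel_left] at this
  exact Submodule.mem_sup.2 ⟨a, ⟨haW, ha⟩, b, ⟨hbW, hb⟩, rfl⟩

theorem sign_invol {A : Type*} [Ring A] [Algebra K A] {𝒜 : ZMod 2 → Submodule K A}
    (h : IsZ2Grading K 𝒜) (σ : A →ₐ[K] A) (h0 : ∀ a ∈ 𝒜 0, σ a = a) (h1 : ∀ a ∈ 𝒜 1, σ a = -a)
    (x : A) : σ (σ x) = x := by
  have hx : x ∈ 𝒜 0 ⊔ 𝒜 1 := h.1.1 ▸ trivial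
  obtain ⟨a, ha, b, hb, rfl⟩ := Submodule.mem_sup.1 hx
  simp [h0 _ ha, h1 _ hb]

/-- ungraded simplicity -/
theorem simple_of_graded [CharZero K] {A : Type*} [Ring A] [Algebra K A]
    {𝒜 : ZMod 2 → Submodule K A}
    (h : IsZ2Grading K 𝒜) (hs : IsGradedSimple K 𝒜) (hc : Subalgebra.center K A = ⊥)
    (N : Submodule K A) (hN : IsTwoSidedSubmodule K N) : N = ⊥ ∨ N = ⊤ := by
  obtain ⟨σ, h0, h1⟩ := exists_sign h
  have inv := sign_invol h σ h0 h1
  have hgr := graded_of_sign h.1 σ.toLinearMap h0 h1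
  let N' : Submodule K A := N.comap σ.toLinearMap
  have mN' : ∀ x, x ∈ N' ↔ σ x ∈ N := fun x => Iff.rfl
  have hN' : IsTwoSidedSubmodule K N' := fun a x hx => by
    simp only [mN', map_mul] at hx ⊢
    exact hN _ _ hx
  have hI : IsTwoSidedSubmodule K (N ⊓ N') := fun a x hx =>
    ⟨⟨(hN a x hx.1).1, (hN' a x hx.2).1⟩, ⟨(hN a x hx.1).2, (hN' a x hx.2).2⟩⟩
  have hS : IsTwoSidedSubmodule K (N ⊔ N') := fun a x hx => by
    obtain ⟨y, hy, z, hz, rfl⟩ := Submodule.mem_sup.1 hx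
    rw [mul_add, add_mul]
    exact ⟨Submodule.add_mem_sup (hN a y hy).1 (hN' a z hz).1,
      Submodule.add_mem_sup (hN a y hy).2 (hN' a z hz).2⟩
  rcases hs _ hI (hgr _ fun x hx => ⟨hx.2, by
      show σ (σ x) ∈ N
      rw [inv]; exact hx.1⟩) with hbot | htop
  swap
  · right; exact top_le_iff.1 (htop ▸ inf_le_left)
  rcases hs _ hS (hgr _ fun x hx => by
      obtain ⟨y, hy, z, hz, rfl⟩ := Submodule.mem_sup.1 hx
      rw [map_add, add_comm]
      refine Submodule.add_mem_sup hz ?_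
      show σ (σ y) ∈ N
      rw [inv]; exact hy) with hbot2 | htop
  · left; exact le_bot_iff.1 (hbot2 ▸ le_sup_left)
  have h1m : (1 : A) ∈ N ⊔ N' := htop ▸ trivial
  obtain ⟨e, he, e', he', hee⟩ := Submodule.mem_sup.1 h1m
  have hz : ∀ x, x ∈ N → x ∈ N' → x = 0 := fun x hx hx' => by
    have : x ∈ N ⊓ N' := ⟨hx, hx'⟩
    rwa [hbot] at this
  have cen : e ∈ Subalgebra.center K A := by
    rw [Subalgebra.mem_center_iff]
    intro b
    have hd : b * e - e * b = e' * b - b * e' := by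
      have : e' = 1 - e := by rw [← hee]; abel
      rw [this]; noncomm_ring
    have : b * e - e * b = 0 := by
      refine hz _ (sub_mem (hN _ _ he).1 (hN _ _ he).2) ?_
      rw [hd]
      exact sub_mem (hN' _ _ he').2 (hN' _ _ he').1
    exact sub_eq_zero.1 this
  rw [hc, Algebra.mem_bot] at cen
  obtain ⟨k, hk⟩ := cen
  by_cases hk0 : k = 0
  · left
    have e0 : e = 0 := by rw [← hk, hk0, map_zero]
    rw [e0, zero_add] at hee
    rw [hee] at he'
    have : (1 : A) ∈ N := by simpa [mN'] using he'
    have A0 := hz 1 this he'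
    refine le_bot_iff.1 fun x _ => ?_
    rw [Submodule.mem_bot, ← mul_one x, A0, mul_zero]
  · right
    refine top_le_iff.1 fun x _ => ?_
    have := N.smul_mem k⁻¹ (hN x e he).1
    rwa [← hk, ← Algebra.commutes, ← Algebra.smul_def, inv_smul_smul₀ hk0] at this

theorem mulLeftRight_surj {A : Type*} [Ring A] [Algebra K A] [FiniteDimensional K A] [Nontrivial A]
    (hc : Subalgebra.center K A = ⊥)
    (hs : ∀ N : Submodule K A, IsTwoSidedSubmodule K N → N = ⊥ ∨ N = ⊤) (g : Module.End K A) :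
    ∃ t, AlgHom.mulLeftRight K A t = g := by
  let R := (AlgHom.mulLeftRight K A).range
  have mR : ∀ a b : A, ∃ r : R, ∀ x : A, r • x = a * x * b := fun a b =>
    ⟨⟨_, a ⊗ₜ MulOpposite.op b, rfl⟩, fun x => by
      show AlgHom.mulLeftRight K A (a ⊗ₜ MulOpposite.op b) x = _
      simp⟩
  have : IsSimpleModule R A := by
    rw [isSimpleModule_iff]
    refine { eq_bot_or_eq_top := fun N => ?_ }
    have hN : IsTwoSidedSubmodule K (N.restrictScalars K) := fun a x hx => by
      obtain ⟨r, hr⟩ := mR a 1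
      obtain ⟨r', hr'⟩ := mR 1 a
      have e1 := N.smul_mem r hx
      have e2 := N.smul_mem r' hx
      rw [hr, mul_one] at e1
      rw [hr', one_mul] at e2
      exact ⟨e1, e2⟩
    rcases hs _ hN with h | h
    · left; simpa using h
    · right; simpa using h
  let f : Module.End (Module.End R A) A :=
    { toFun := g
      map_add' := map_add g
      map_smul' := fun φ x => by
        have e1 : ∀ y, φ y = y * φ 1 := fun y => by
          obtain ⟨r, hr⟩ := mR y 1
          have := φ.map_smul r 1
          simpa [hr] using this
        have e2 : ∀ y, φ y = φ 1 * y := fun y => by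
          obtain ⟨r, hr⟩ := mR 1 y
          have := φ.map_smul r 1
          simpa [hr] using this
        have cen : φ 1 ∈ Subalgebra.center K A :=
          Subalgebra.mem_center_iff.2 fun b => by rw [← e1, ← e2]
        rw [hc, Algebra.mem_bot] at cen
        obtain ⟨k, hk⟩ := cen
        have e3 : ∀ y, φ y = k • y := fun y => by rw [e2, ← hk, Algebra.smul_def]
        show g (φ x) = φ (g x)
        rw [e3, e3, map_smul] }
  let b := Module.finBasis K A
  classical
  obtain ⟨r, hr⟩ := jacobson_density (R := R) f (Finset.univ.image b)
  obtain ⟨_, t, rfl⟩ := r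
  refine ⟨t, b.ext fun i => ?_⟩
  have := hr (b i) (Finset.mem_image_of_mem _ (Finset.mem_univ i))
  exact this.symm

end simple

section tensor
variable {K : Type u} [Field K] {A : Type*} [Ring A] [Algebra K A]

/-- contraction -/
noncomputable def con (X : Type*) [AddCommGroup X] [Module K X] (f : A →ₗ[K] K) : A ⊗[K] X →ₗ[K] X :=
  (TensorProduct.lid K X).toLinearMap ∘ₗ LinearMap.rTensor X f

@[simp] theorem con_tmul (X : Type*) [AddCommGroup X] [Module K X] (f : A →ₗ[K] K) (a : A) (x : X) :
    con X f (a ⊗ₜ[K] x) = f a • x := by simp [con]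

theorem con_expand [FiniteDimensional K A] (X : Type*) [AddCommGroup X] [Module K X] (m : A ⊗[K] X) :
    m = ∑ i, (Module.finBasis K A i) ⊗ₜ[K] con X ((Module.finBasis K A).coord i) m := by
  induction m using TensorProduct.induction_on with
  | zero => simp
  | tmul a x =>
    conv_lhs => rw [← (Module.finBasis K A).sum_repr a, TensorProduct.sum_tmul]
    simp [TensorProduct.smul_tmul]
  | add x y hx hy =>
    conv_lhs => rw [hx, hy]
    simp [TensorProduct.tmul_add, Finset.sum_add_distrib]

theorem mem_tensor_iff [FiniteDimensional K A] {X : Type*} [AddCommGroup X] [Module K X]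
    (W : Submodule K X) (m : A ⊗[K] X) :
    m ∈ LinearMap.range (TensorProduct.map (LinearMap.id : A →ₗ[K] A) W.subtype) ↔
      ∀ f : A →ₗ[K] K, con X f m ∈ W := by
  constructor
  · rintro ⟨n, rfl⟩ f
    induction n using TensorProduct.induction_on with
    | zero => simp
    | tmul a x => simpa using W.smul_mem _ x.2
    | add x y hx hy => rw [map_add, map_add]; exact W.add_mem hx hy
  · intro h
    rw [con_expand X m]
    exact Submodule.sum_mem _ fun i _ => ⟨(Module.finBasis K A i) ⊗ₜ ⟨_, h _⟩, rfl⟩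

theorem con_map {X Y : Type*} [AddCommGroup X] [Module K X] [AddCommGroup Y] [Module K Y]
    (g : X →ₗ[K] Y) (f : A →ₗ[K] K) (m : A ⊗[K] X) :
    con Y f (TensorProduct.map LinearMap.id g m) = g (con X f m) := by
  induction m using TensorProduct.induction_on with
  | zero => simp
  | tmul a x => simp
  | add x y hx hy => simp only [map_add, hx, hy]

theorem super_map {X Y : Type*} [AddCommGroup X] [Module K X] [AddCommGroup Y] [Module K Y]
    (𝒜 : ZMod 2 → Submodule K A) (𝒳 : ZMod 2 → Submodule K X) (𝒴 : ZMod 2 → Submodule K Y)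
    (g : X →ₗ[K] Y) (hg : ∀ k, ∀ x ∈ 𝒳 k, g x ∈ 𝒴 k) (k : ZMod 2) (m : A ⊗[K] X)
    (hm : m ∈ superTensorGrading K 𝒜 𝒳 k) :
    TensorProduct.map LinearMap.id g m ∈ superTensorGrading K 𝒜 𝒴 k := by
  obtain ⟨_, ⟨p, rfl⟩, _, ⟨q, rfl⟩, rfl⟩ := Submodule.mem_sup.1 hm
  rw [map_add]
  refine Submodule.add_mem_sup ?_ ?_
  · induction p using TensorProduct.induction_on with
    | zero => simp
    | tmul a x => exact ⟨a ⊗ₜ ⟨g x, hg _ _ x.2⟩, by simp⟩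
    | add x y hx hy => 
      rw [map_add, map_add]
      exact add_mem (hx (Submodule.add_mem_sup ⟨_, rfl⟩ ⟨_, rfl⟩))
        (hy (Submodule.add_mem_sup ⟨_, rfl⟩ ⟨_, rfl⟩))
  · induction q using TensorProduct.induction_on with
    | zero => simp
    | tmul a x => exact ⟨a ⊗ₜ ⟨g x, hg _ _ x.2⟩, by simp⟩
    | add x y hx hy => 
      rw [map_add, map_add]
      exact add_mem (hx (Submodule.add_mem_sup ⟨_, rfl⟩ ⟨_, rfl⟩))
        (hy (Submodule.add_mem_sup ⟨_, rfl⟩ ⟨_, rfl⟩))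

theorem super_sign {X : Type*} [AddCommGroup X] [Module K X]
    (𝒜 : ZMod 2 → Submodule K A) (𝒳 : ZMod 2 → Submodule K X)
    (σ : A →ₗ[K] A) (h0 : ∀ a ∈ 𝒜 0, σ a = a) (h1 : ∀ a ∈ 𝒜 1, σ a = -a)
    (τ : X →ₗ[K] X) (t0 : ∀ a ∈ 𝒳 0, τ a = a) (t1 : ∀ a ∈ 𝒳 1, τ a = -a) (m : A ⊗[K] X) :
    (m ∈ superTensorGrading K 𝒜 𝒳 0 → TensorProduct.map σ τ m = m) ∧
    (m ∈ superTensorGrading K 𝒜 𝒳 1 → TensorProduct.map σ τ m = (-1 : K) • m) := by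
  have key : ∀ (i j : ZMod 2) (c : K), (∀ a ∈ 𝒜 i, ∀ x ∈ 𝒳 j, σ a ⊗ₜ[K] τ x = c • (a ⊗ₜ[K] x)) →
      ∀ p, TensorProduct.map σ τ (TensorProduct.map (𝒜 i).subtype (𝒳 j).subtype p) =
        c • TensorProduct.map (𝒜 i).subtype (𝒳 j).subtype p := by
    intro i j c h p
    induction p using TensorProduct.induction_on with
    | zero => simp
    | tmul a x => simpa using h a a.2 x x.2
    | add x y hx hy => simp only [map_add, hx, hy, smul_add]
  constructor
  · intro hm
    obtain ⟨_, ⟨p, rfl⟩, _, ⟨q, rfl⟩, rfl⟩ := Submodule.mem_sup.1 hm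
    rw [map_add, key 0 0 1 (fun a ha x hx => by simp [h0 a ha, t0 x hx]), 
      key 1 (0 + 1) 1 (fun a ha x hx => by 
        rw [h1 a ha, t1 x hx, TensorProduct.neg_tmul, TensorProduct.tmul_neg]; simp)]
    simp
  · intro hm
    obtain ⟨_, ⟨p, rfl⟩, _, ⟨q, rfl⟩, rfl⟩ := Submodule.mem_sup.1 hm
    rw [map_add, key 0 1 (-1) (fun a ha x hx => by 
        rw [h0 a ha, t1 x hx, ← TensorProduct.tmul_smul, neg_one_smul]), 
      key 1 (1 + 1) (-1) (fun a ha x hx => by 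
        rw [h1 a ha, t0 x hx, TensorProduct.smul_tmul', neg_one_smul])]
    rw [smul_add]

theorem rTensor_mem [FiniteDimensional K A] [Nontrivial A]
    (hsurj : ∀ g : Module.End K A, ∃ t, AlgHom.mulLeftRight K A t = g)
    {X : Type*} [Ring X] [Algebra K X] (M : Submodule K (A ⊗[K] X)) (hM : IsTwoSidedSubmodule K M)
    (g : Module.End K A) (m : A ⊗[K] X) (hm : m ∈ M) : LinearMap.rTensor X g m ∈ M := by
  obtain ⟨t, rfl⟩ := hsurj g
  induction t using TensorProduct.induction_on with
  | zero => simp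
  | tmul a b =>
    have : LinearMap.rTensor X (AlgHom.mulLeftRight K A (a ⊗ₜ b)) m =
        (a ⊗ₜ[K] (1 : X)) * m * (b.unop ⊗ₜ[K] (1 : X)) := by
      clear hm
      induction m using TensorProduct.induction_on with
      | zero => simp
      | tmul a x => simp
      | add x y hx hy => simp only [map_add, hx, hy, mul_add, add_mul]
    rw [this]
    exact (hM _ _ (hM _ _ hm).1).2
  | add x y hx hy =>
    rw [map_add, LinearMap.rTensor_add]
    exact M.add_mem hx hy

end tensor

section quot
variable {K : Type u} [Field K] {B : Type u} [Ring B] [Algebra K B] 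

theorem mk_eq_zero {J : Submodule K B} (hJ : IsTwoSidedSubmodule K J) (x : B) :
    RingQuot.mkAlgHom K (idealRel K J) x = 0 ↔ x ∈ J := by
  constructor
  · intro h
    let T : TwoSidedIdeal B := TwoSidedIdeal.mk' (J : Set B) J.zero_mem J.add_mem J.neg_mem
      (fun h => (hJ _ _ h).1) (fun h => (hJ _ _ h).2)
    have hT : ∀ x, x ∈ T ↔ x ∈ J := fun x => TwoSidedIdeal.mem_mk' ..
    let f : B →+* T.ringCon.Quotient := T.ringCon.mk'
    have hf : ∀ x y, f x = f y ↔ x - y ∈ J := fun x y => by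
      rw [← hT, ← TwoSidedIdeal.rel_iff]
      exact RingCon.eq _
    have w : ∀ ⦃x y⦄, idealRel K J x y → f x = f y := fun x y h => (hf x y).2 h
    have e : RingQuot.mkRingHom (idealRel K J) x = 0 := by
      rw [← RingQuot.mkAlgHom_coe K]; exact h
    have e2 := RingQuot.lift_mkRingHom_apply f w x
    rw [e, map_zero] at e2
    have := (hf x 0).1 (by rw [map_zero, ← e2])
    simpa using this
  · intro h
    rw [← map_zero (RingQuot.mkAlgHom K (idealRel K J))]
    exact RingQuot.mkAlgHom_rel K (by simpa [idealRel] using h)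

theorem quot_grading {ℬ : ZMod 2 → Submodule K B} (hB : IsZ2Grading K ℬ) {J : Submodule K B} 
    (hJ : IsTwoSidedSubmodule K J) (hJg : IsGradedSubmodule K ℬ J) : 
    IsZ2Grading K (quotGrading K ℬ J) := by
  refine ⟨⟨?_, ?_⟩, ⟨1, hB.2.1, map_one (RingQuot.mkAlgHom K (idealRel K J))⟩, ?_⟩
  · unfold quotGrading
    rw [← Submodule.map_sup, hB.1.1, Submodule.map_top, LinearMap.range_eq_top]
    exact RingQuot.mkAlgHom_surjective K _
  · rw [eq_bot_iff]
    rintro _ ⟨⟨x, hx, rfl⟩, ⟨y, hy, hxy⟩⟩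
    simp only [AlgHom.toLinearMap_apply] at hxy ⊢
    have : x + -y ∈ J := by
      rw [← mk_eq_zero hJ, map_add, map_neg, hxy, add_neg_cancel]
    have := mem_of_graded hB.1 hJg hx (neg_mem hy) this
    exact (mk_eq_zero hJ x).2 this.1
  · rintro i j _ ⟨a, ha, rfl⟩ _ ⟨b, hb, rfl⟩
    exact ⟨a * b, hB.2.2 i j a ha b hb, by simp⟩

theorem quot_super {ℬ : ZMod 2 → Submodule K B} (hB : IsSupercommutative K ℬ) (J : Submodule K B) : 
    IsSupercommutative K (quotGrading K ℬ J) := by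
  rintro i j _ ⟨a, ha, rfl⟩ _ ⟨b, hb, rfl⟩
  simp only [AlgHom.toLinearMap_apply]
  rw [← map_mul, hB i j a ha b hb, map_smul, map_mul]

end quot

theorem twoSidedSpan_two {K : Type u} [Field K] {A : Type u} [Ring A] [Algebra K A] (s : Set A) :
    IsTwoSidedSubmodule K (twoSidedSpan K s) := by
  intro a x hx
  simp only [twoSidedSpan, Submodule.mem_sInf] at hx ⊢
  exact ⟨fun N hN => (hN.1 a x (hx N hN)).1, fun N hN => (hN.1 a x (hx N hN)).2⟩

theorem subset_twoSidedSpan {K : Type u} [Field K] {A : Type u} [Ring A] [Algebra K A] (s : Set A) :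
    s ⊆ twoSidedSpan K s := by
  intro x hx
  simp only [twoSidedSpan, SetLike.mem_coe, Submodule.mem_sInf]
  exact fun N hN => hN.2 hx

theorem twoSidedSpan_le {K : Type u} [Field K] {A : Type u} [Ring A] [Algebra K A] {s : Set A}
    {N : Submodule K A} (hN : IsTwoSidedSubmodule K N) (h : s ⊆ N) : twoSidedSpan K s ≤ N :=
  sInf_le ⟨hN, h⟩

theorem exists_J
    {K : Type u} [Field K] [CharZero K]
    {A : Type u} [Ring A] [Algebra K A] [FiniteDimensional K A]
    (𝒜 : ZMod 2 → Submodule K A) (h𝒜 : IsZ2Grading K 𝒜)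
    (hsimple : IsGradedSimple K 𝒜)
    (hcentral : Subalgebra.center K A = ⊥)
    {B : Type u} [Ring B] [Algebra K B]
    (ℬ : ZMod 2 → Submodule K B)
    (Ξ : SuperAlg K) (ρ : B →ₐ[K] A ⊗[K] Ξ.carrier)
    (hρ : IsGradedHom K ℬ (superTensorGrading K 𝒜 Ξ.grading) ρ)
    (I : Submodule K B)
    (hIgr : IsGradedSubmodule K ℬ I) :
    ∃ J : Submodule K Ξ.carrier,
      IsTwoSidedSubmodule K J ∧ IsGradedSubmodule K Ξ.grading J ∧
      twoSidedSpan K (⇑ρ '' (I : Set B)) = tensorIdeal K J ∧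
      ∀ (F : SuperAlg K) (ζ : Ξ.carrier →ₐ[K] F.carrier),
        (∀ b ∈ I, Algebra.TensorProduct.map (AlgHom.id K A) ζ (ρ b) = 0) → ∀ x ∈ J, ζ x = 0 := by
  rcases subsingleton_or_nontrivial A with hA | hA
  · have : Subsingleton (A ⊗[K] Ξ.carrier) := by
      refine subsingleton_of_forall_eq 0 fun m => ?_
      rw [← mul_one m, Algebra.TensorProduct.one_def, Subsingleton.elim (1 : A) 0,
        TensorProduct.zero_tmul, mul_zero]
    refine ⟨⊥, ?_, ?_, Subsingleton.elim _ _, ?_⟩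
    · intro a x hx
      rw [Submodule.mem_bot] at hx
      simp [hx]
    · simp [IsGradedSubmodule]
    · intro F ζ _ x hx
      rw [Submodule.mem_bot] at hx
      simp [hx]
  set M := twoSidedSpan K (⇑ρ '' (I : Set B)) with hMdef
  have hM : IsTwoSidedSubmodule K M := twoSidedSpan_two _
  have hsurj := mulLeftRight_surj hcentral (simple_of_graded h𝒜 hsimple hcentral)
  let inc : Ξ.carrier →ₐ[K] A ⊗[K] Ξ.carrier := Algebra.TensorProduct.includeRight
  have hinc : ∀ x, inc x = 1 ⊗ₜ x := fun x => rfl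
  let J : Submodule K Ξ.carrier := M.comap inc.toLinearMap
  have mJ : ∀ x, x ∈ J ↔ inc x ∈ M := fun x => Iff.rfl
  refine ⟨J, ?_, ?_, ?_, ?_⟩
  · intro a x hx
    simp only [mJ, map_mul] at hx ⊢
    exact hM _ _ hx
  · obtain ⟨σ, h0, h1⟩ := exists_sign h𝒜
    obtain ⟨τ, t0, t1⟩ := exists_sign Ξ.isGrading
    refine graded_of_sign Ξ.isGrading.1 τ.toLinearMap t0 t1 J ?_
    let st := Algebra.TensorProduct.map σ τ
    have hst : ∀ m, st m = TensorProduct.map σ.toLinearMap τ.toLinearMap m := fun m => rfl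
    have hle : M ≤ M.comap st.toLinearMap := by
      refine twoSidedSpan_le ?_ ?_
      · intro a x hx
        simp only [Submodule.mem_comap, AlgHom.toLinearMap_apply, map_mul] at hx ⊢
        exact hM _ _ hx
      · rintro _ ⟨b, hb, rfl⟩
        rw [SetLike.mem_coe, hIgr] at hb
        obtain ⟨x, hx, y, hy, rfl⟩ := Submodule.mem_sup.1 hb
        have ss := super_sign 𝒜 Ξ.grading σ.toLinearMap h0 h1 τ.toLinearMap t0 t1
        have ex := (ss (ρ x)).1 (hρ 0 x hx.2)
        have ey := (ss (ρ y)).2 (hρ 1 y hy.2)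
        simp only [SetLike.mem_coe, Submodule.mem_comap, AlgHom.toLinearMap_apply, map_add, hst]
        rw [ex, ey]
        exact M.add_mem (subset_twoSidedSpan _ ⟨x, hx.1, rfl⟩)
          (M.smul_mem _ (subset_twoSidedSpan _ ⟨y, hy.1, rfl⟩))
    intro x hx
    have := hle hx
    simpa [mJ, hinc, st] using this
  · ext m
    rw [tensorIdeal, mem_tensor_iff]
    have key : ∀ f : A →ₗ[K] K, inc (con _ f m) =
        LinearMap.rTensor _ (LinearMap.toSpanSingleton K A 1 ∘ₗ f) m := by
      intro f
      induction m using TensorProduct.induction_on with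
      | zero => simp
      | tmul a x => simp [hinc, TensorProduct.smul_tmul]
      | add x y hx hy => simp only [map_add, hx, hy]
    constructor
    · intro hm f
      rw [mJ, key]
      exact rTensor_mem hsurj M hM _ m hm
    · intro h
      rw [con_expand _ m]
      refine Submodule.sum_mem _ fun i _ => ?_
      have := (hM ((Module.finBasis K A i) ⊗ₜ 1) _ (h ((Module.finBasis K A).coord i))).1
      simpa [hinc] using this
  · intro F ζ hζ x hx
    let z := Algebra.TensorProduct.map (AlgHom.id K A) ζ
    have hle : M ≤ LinearMap.ker z.toLinearMap := by
      refine twoSidedSpan_le ?_ ?_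
      · intro a x hx
        simp only [LinearMap.mem_ker, AlgHom.toLinearMap_apply, map_mul] at hx ⊢
        simp [hx]
      · rintro _ ⟨b, hb, rfl⟩
        exact hζ b hb
    have h := hle hx
    simp only [LinearMap.mem_ker, AlgHom.toLinearMap_apply, z, hinc,
      Algebra.TensorProduct.map_tmul, map_one] at h
    exact Algebra.TensorProduct.includeRight_injective (R := K) (A := A)
      (FaithfulSMul.algebraMap_injective K A) (by simpa using h)

end USQ

/-- Universal supermaps pass to quotients: if `(Ξ, ρ)` is an `A`-universal
supermap for `B` and `I` is a graded two-sided ideal of `B`, then there are a graded ideal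
`J` of `Ξ` with `A ⊗ J` equal to the two-sided ideal of `A ⊗ Ξ` generated by `ρ(I)`, and a
graded homomorphism `ρ' : B/I → A ⊗ (Ξ/J)` with `ρ' ∘ p_I = (id_A ⊗ p_J) ∘ ρ` such that
`(Ξ/J, ρ')` is an `A`-universal supermap for `B/I`. -/
theorem universal_supermap_quotient
    {K : Type u} [Field K] [CharZero K]
    {A : Type u} [Ring A] [Algebra K A] [FiniteDimensional K A]
    (𝒜 : ZMod 2 → Submodule K A) (h𝒜 : IsZ2Grading K 𝒜)
    (hsimple : IsGradedSimple K 𝒜)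
    (hcentral : Subalgebra.center K A = ⊥)
    {B : Type u} [Ring B] [Algebra K B]
    (ℬ : ZMod 2 → Submodule K B) (hℬ : IsZ2Grading K ℬ)
    (Ξ : SuperAlg K) (ρ : B →ₐ[K] A ⊗[K] Ξ.carrier)
    (hU : IsUniversalSupermap K 𝒜 ℬ Ξ ρ)
    (I : Submodule K B) (hI2 : IsTwoSidedSubmodule K I)
    (hIgr : IsGradedSubmodule K ℬ I) :
    ∃ J : Submodule K Ξ.carrier,
      IsTwoSidedSubmodule K J ∧ IsGradedSubmodule K Ξ.grading J ∧
      twoSidedSpan K (⇑ρ '' (I : Set B)) = tensorIdeal K J ∧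
      ∃ (hgr : IsZ2Grading K (quotGrading K Ξ.grading J))
        (hsc : IsSupercommutative K (quotGrading K Ξ.grading J))
        (ρ' : RingQuot (idealRel K I) →ₐ[K] A ⊗[K] RingQuot (idealRel K J)),
        ρ'.comp (RingQuot.mkAlgHom K (idealRel K I)) =
          (Algebra.TensorProduct.map (AlgHom.id K A)
            (RingQuot.mkAlgHom K (idealRel K J))).comp ρ ∧
        IsUniversalSupermap K 𝒜 (quotGrading K ℬ I)
          (⟨RingQuot (idealRel K J), quotGrading K Ξ.grading J, hgr, hsc⟩ : SuperAlg K) ρ' := by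
  obtain ⟨hρ, hmin, huni⟩ := hU
  obtain ⟨J, hJ2, hJg, hspan, hJk⟩ := USQ.exists_J 𝒜 h𝒜 hsimple hcentral ℬ Ξ ρ hρ I hIgr
  have hgr := USQ.quot_grading Ξ.isGrading hJ2 hJg
  have hsc := USQ.quot_super Ξ.isSupercomm J
  refine ⟨J, hJ2, hJg, hspan, hgr, hsc, ?_⟩
  let pI := RingQuot.mkAlgHom K (idealRel K I)
  let pJ := RingQuot.mkAlgHom K (idealRel K J)
  have surI : Function.Surjective pI := RingQuot.mkAlgHom_surjective K _
  have surJ : Function.Surjective pJ := RingQuot.mkAlgHom_surjective K _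
  let q := Algebra.TensorProduct.map (AlgHom.id K A) pJ
  have hq : ∀ m, q m = TensorProduct.map LinearMap.id pJ.toLinearMap m := fun m => rfl
  have hρI : ∀ b ∈ I, q (ρ b) = 0 := by
    intro b hb
    have h1 : ρ b ∈ tensorIdeal K J := hspan ▸ USQ.subset_twoSidedSpan _ ⟨b, hb, rfl⟩
    rw [tensorIdeal, USQ.mem_tensor_iff] at h1
    rw [USQ.con_expand _ (q (ρ b))]
    refine Finset.sum_eq_zero fun i _ => ?_
    have h2 : pJ (USQ.con _ ((Module.finBasis K A).coord i) (ρ b)) = 0 :=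
      (USQ.mk_eq_zero hJ2 _).2 (h1 _)
    rw [hq, USQ.con_map, AlgHom.toLinearMap_apply, h2, TensorProduct.tmul_zero]
  have w : ∀ ⦃x y : B⦄, idealRel K I x y → (q.comp ρ) x = (q.comp ρ) y := fun x y h => by
    have := hρI _ h
    rw [map_sub, map_sub, sub_eq_zero] at this
    exact this
  let ρ' := RingQuot.liftAlgHom K ⟨q.comp ρ, w⟩
  have hρ' : ∀ b, ρ' (pI b) = q (ρ b) := fun b =>
    RingQuot.liftAlgHom_mkAlgHom_apply K (q.comp ρ) w b
  refine ⟨ρ', AlgHom.ext hρ', ?_, ?_, ?_⟩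
  · rintro k _ ⟨b, hb, rfl⟩
    have := USQ.super_map 𝒜 Ξ.grading (quotGrading K Ξ.grading J) pJ.toLinearMap
      (fun k x hx => ⟨x, hx, rfl⟩) k (ρ b) (hρ k b hb)
    rw [← hq, ← hρ'] at this
    exact this
  · intro S hS hmap
    have hS' : S.comap pJ = ⊤ := by
      refine hmin _ ?_ ?_
      · refine le_antisymm ?_ (sup_le inf_le_left inf_le_left)
        intro x hxS
        have hx : x ∈ Ξ.grading 0 ⊔ Ξ.grading 1 := Ξ.isGrading.1.1 ▸ trivial
        obtain ⟨a, ha, b, hb, rfl⟩ := Submodule.mem_sup.1 hx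
        have h1 : pJ a + pJ b ∈ Subalgebra.toSubmodule S := by
          rw [← map_add]; exact hxS
        have h2 := USQ.mem_of_graded hgr.1 hS (x := pJ a) (y := pJ b) ⟨a, ha, rfl⟩ ⟨b, hb, rfl⟩ h1
        exact Submodule.mem_sup.2 ⟨a, ⟨h2.1, ha⟩, b, ⟨h2.2, hb⟩, rfl⟩
      · intro b
        have h1 := hmap (pI b)
        rw [hρ', USQ.mem_tensor_iff] at h1
        rw [USQ.mem_tensor_iff]
        intro f
        have h2 := h1 f
        rw [hq, USQ.con_map] at h2
        exact h2
    refine top_le_iff.1 fun x _ => ?_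
    obtain ⟨y, rfl⟩ := surJ x
    have : y ∈ S.comap pJ := hS' ▸ trivial
    exact this
  · intro F κ hκ
    obtain ⟨ζ, hζ, hζρ⟩ := huni F (κ.comp pI) (fun k b hb => hκ k _ ⟨b, hb, rfl⟩)
    have hζρ' : ∀ b, Algebra.TensorProduct.map (AlgHom.id K A) ζ (ρ b) = κ (pI b) :=
      fun b => DFunLike.congr_fun hζρ b
    have hk := hJk F ζ (fun b hb => by
      rw [hζρ', (USQ.mk_eq_zero hI2 b).2 hb, map_zero])
    have w' : ∀ ⦃x y⦄, idealRel K J x y → ζ x = ζ y := fun x y h => by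
      have := hk _ h
      rwa [map_sub, sub_eq_zero] at this
    let ζ' := RingQuot.liftAlgHom K ⟨ζ, w'⟩
    have hζ' : ∀ x, ζ' (pJ x) = ζ x := fun x => RingQuot.liftAlgHom_mkAlgHom_apply K ζ w' x
    refine ⟨ζ', ?_, ?_⟩
    · rintro k _ ⟨x, hx, rfl⟩
      have := hζ k x hx
      rw [← hζ'] at this
      exact this
    · refine AlgHom.ext fun y => ?_
      obtain ⟨b, rfl⟩ := surI y
      rw [AlgHom.comp_apply, hρ', ← hζρ']
      have hc : ζ'.comp pJ = ζ := AlgHom.ext hζ'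
      generalize ρ b = m
      induction m using TensorProduct.induction_on with
      | zero => simp
      | tmul a x => simp [q, hζ']
      | add x y hx hy => simp only [map_add, hx, hy]
end

section
/- Let K be a field of characteristic 0, A a finite-dimensional ℤ₂-graded associative unital K-algebra, B a ℤ₂-graded associative unital K-algebra, and (Ξ, ρ) an A-universal supermap for B. Then for every supercommutative K-algebra F, the map sending a graded K-algebra homomorphism ζ: Ξ → F to the graded homomorphism (id_A⊗ζ)∘ρ: B → A⊗F is a bijection between the set of graded K-algebra homomorphisms from Ξ to F and the set of graded K-algebra homomorphisms from B to A⊗F. -/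
open TensorProduct

universe u

/-- The adjunction bijection: if `(Ξ, ρ)` is an `A`-universal supermap for
`B`, then for every supercommutative algebra `F`, the map `ζ ↦ (id_A ⊗ ζ) ∘ ρ` is a bijection
from the graded homomorphisms `Ξ → F` onto the graded homomorphisms `B → A ⊗ F`. -/
theorem universal_supermap_bijection
    {K : Type u} [Field K] [CharZero K]
    {A : Type u} [Ring A] [Algebra K A] [FiniteDimensional K A]
    (𝒜 : ZMod 2 → Submodule K A) (h𝒜 : IsZ2Grading K 𝒜)
    {B : Type u} [Ring B] [Algebra K B]
    (ℬ : ZMod 2 → Submodule K B) (hℬ : IsZ2Grading K ℬ)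
    (Ξ : SuperAlg K) (ρ : B →ₐ[K] A ⊗[K] Ξ.carrier)
    (hU : IsUniversalSupermap K 𝒜 ℬ Ξ ρ)
    (F : SuperAlg K) :
    Set.BijOn
      (fun ζ : Ξ.carrier →ₐ[K] F.carrier =>
        (Algebra.TensorProduct.map (AlgHom.id K A) ζ).comp ρ)
      {ζ : Ξ.carrier →ₐ[K] F.carrier | IsGradedHom K Ξ.grading F.grading ζ}
      {κ : B →ₐ[K] A ⊗[K] F.carrier |
        IsGradedHom K ℬ (superTensorGrading K 𝒜 F.grading) κ} := by
  obtain ⟨hρ, hmin, huniv⟩ := hU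
  refine ⟨?_, ?_, ?_⟩
  · intro ζ hζ k b hb
    have h := hρ k b hb
    have key : ∀ i j : ZMod 2, ∀ x ∈ LinearMap.range
        (TensorProduct.map (𝒜 i).subtype (Ξ.grading j).subtype),
        Algebra.TensorProduct.map (AlgHom.id K A) ζ x ∈ LinearMap.range
        (TensorProduct.map (𝒜 i).subtype (F.grading j).subtype) := by
      rintro i j _ ⟨y, rfl⟩
      induction y using TensorProduct.induction_on with
      | zero => simp
      | add p q hp hq => rw [map_add, map_add]; exact Submodule.add_mem _ hp hq
      | tmul p q => exact ⟨p ⊗ₜ ⟨ζ q, hζ j q q.2⟩, by simp⟩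
    obtain ⟨y, hy, z, hz, hyz⟩ := Submodule.mem_sup.1 h
    show Algebra.TensorProduct.map (AlgHom.id K A) ζ (ρ b) ∈ _
    rw [← hyz, map_add]
    exact Submodule.add_mem_sup (key _ _ _ hy) (key _ _ _ hz)
  · intro ζ₁ h₁ ζ₂ h₂ h
    have hS : AlgHom.equalizer ζ₁ ζ₂ = ⊤ := by
      apply hmin
      · apply le_antisymm
        · intro x hx
          have hx' : ζ₁ x = ζ₂ x := hx
          have ht : x ∈ Ξ.grading 0 ⊔ Ξ.grading 1 := by
            rw [Ξ.isGrading.1.1]; trivial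
          obtain ⟨y, hy, z, hz, rfl⟩ := Submodule.mem_sup.1 ht
          rw [map_add, map_add] at hx'
          have e : ζ₁ y - ζ₂ y = ζ₂ z - ζ₁ z := by
            rw [sub_eq_sub_iff_add_eq_add, hx', add_comm]
          have m : ζ₁ y - ζ₂ y ∈ F.grading 0 ⊓ F.grading 1 :=
            ⟨Submodule.sub_mem _ (h₁ 0 y hy) (h₂ 0 y hy),
              e ▸ Submodule.sub_mem _ (h₂ 1 z hz) (h₁ 1 z hz)⟩
          rw [F.isGrading.1.2, Submodule.mem_bot] at m
          have ey : ζ₁ y = ζ₂ y := sub_eq_zero.1 m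
          have ez : ζ₁ z = ζ₂ z := (sub_eq_zero.1 (e ▸ m)).symm
          exact Submodule.add_mem_sup ⟨ey, hy⟩ ⟨ez, hz⟩
        · exact sup_le inf_le_left inf_le_left
      · intro b
        have hb : Algebra.TensorProduct.map (AlgHom.id K A) ζ₁ (ρ b)
            = Algebra.TensorProduct.map (AlgHom.id K A) ζ₂ (ρ b) :=
          DFunLike.congr_fun h b
        have hk : Subalgebra.toSubmodule (AlgHom.equalizer ζ₁ ζ₂)
            = LinearMap.ker (ζ₁.toLinearMap - ζ₂.toLinearMap) := by
          ext x
          simp [sub_eq_zero]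
        have hex : Function.Exact (LinearMap.ker (ζ₁.toLinearMap - ζ₂.toLinearMap)).subtype
            (ζ₁.toLinearMap - ζ₂.toLinearMap) := LinearMap.exact_subtype_ker_map _
        have hex2 := Module.Flat.lTensor_exact A hex
        rw [hk]
        refine (hex2 (ρ b)).1 ?_
        rw [LinearMap.lTensor_sub, LinearMap.sub_apply, sub_eq_zero]
        exact hb
    ext x
    have : x ∈ AlgHom.equalizer ζ₁ ζ₂ := hS ▸ Algebra.mem_top
    exact this
  · intro κ hκ
    obtain ⟨ζ, hζ, e⟩ := huniv F κ hκ
    exact ⟨ζ, hζ, e⟩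
end

section
/- Let K be a field of characteristic 0, A a finite-dimensional ℤ₂-graded associative unital K-algebra, B a ℤ₂-graded associative unital K-algebra, and (Ξ, ρ) an A-universal supermap for B. Then Q := ker ρ is a ℤ₂-graded two-sided ideal of B, the quotient B/Q embeds as a graded subalgebra into A⊗Ξ via the map induced by ρ, and Q is the smallest such ideal: if Q₀ is any ℤ₂-graded ideal of B such that B/Q₀ admits an injective graded homomorphism into A⊗F for some supercommutative K-algebra F, then Q ⊆ Q₀. -/
open TensorProduct

universe u

theorem mk_eq_zero_mem {K : Type u} [Field K] {B : Type u} [Ring B] [Algebra K B]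
    (I : Submodule K B) (hI : IsTwoSidedSubmodule K I) (x : B)
    (hx : RingQuot.mkAlgHom K (idealRel K I) x = 0) : x ∈ I := by
  let J : TwoSidedIdeal B := TwoSidedIdeal.mk' (I : Set B) I.zero_mem
    (fun h h' => I.add_mem h h') (fun h => I.neg_mem h)
    (fun {a b} h => (hI a b h).1) (fun {a b} h => (hI b a h).2)
  have hJ : ∀ y, y ∈ J ↔ y ∈ I := fun y => by
    simp [J, TwoSidedIdeal.mem_mk']
  let f : B →+* J.ringCon.Quotient := J.ringCon.mk'
  have hf : ∀ ⦃a b : B⦄, idealRel K I a b → f a = f b := by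
    intro a b h
    exact (RingCon.eq J.ringCon).2 ((TwoSidedIdeal.rel_iff J a b).2 ((hJ _).2 h))
  have h1 : RingQuot.mkRingHom (idealRel K I) x = 0 := by
    rw [← RingQuot.mkAlgHom_coe K]; exact hx
  have h2 : f x = f 0 := by
    have := RingQuot.lift_mkRingHom_apply f hf x
    rw [← this, h1, map_zero, map_zero]
  have h3 := (TwoSidedIdeal.rel_iff J x 0).1 ((RingCon.eq J.ringCon).1 h2)
  rw [sub_zero] at h3
  exact (hJ _).1 h3

theorem exists_parity {K : Type u} [Field K] {A : Type u} [AddCommGroup A] [Module K A]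
    (𝒜 : ZMod 2 → Submodule K A) (h : IsZ2Decomp K 𝒜) :
    ∃ σ : A →ₗ[K] A, (∀ a ∈ 𝒜 0, σ a = a) ∧ (∀ a ∈ 𝒜 1, σ a = -a) := by
  have hc : IsCompl (𝒜 0) (𝒜 1) := ⟨disjoint_iff.2 h.2, codisjoint_iff.2 h.1⟩
  refine ⟨LinearMap.ofIsCompl hc (𝒜 0).subtype (-(𝒜 1).subtype), ?_, ?_⟩
  · intro a ha
    exact LinearMap.ofIsCompl_left_apply hc ⟨a, ha⟩
  · intro a ha
    exact LinearMap.ofIsCompl_right_apply hc ⟨a, ha⟩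

theorem map_on_piece {K : Type u} [Field K] {A X : Type u} [AddCommGroup A] [Module K A]
    [AddCommGroup X] [Module K X] (P : Submodule K A) (R : Submodule K X)
    (σ : A →ₗ[K] A) (τ : X →ₗ[K] X) (e e' : K)
    (hσ : ∀ a ∈ P, σ a = e • a) (hτ : ∀ a ∈ R, τ a = e' • a) :
    ∀ x ∈ LinearMap.range (TensorProduct.map P.subtype R.subtype),
      TensorProduct.map σ τ x = (e * e') • x := by
  rintro _ ⟨y, rfl⟩
  induction y with
  | zero => simp
  | add a b ha hb => simp only [map_add, smul_add, ha, hb]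
  | tmul a b =>
    simp only [TensorProduct.map_tmul, Submodule.subtype_apply]
    rw [hσ _ a.2, hτ _ b.2, TensorProduct.smul_tmul_smul]

theorem superTensor_disjoint {K : Type u} [Field K] [CharZero K] {A X : Type u}
    [AddCommGroup A] [Module K A] [AddCommGroup X] [Module K X]
    (𝒜 : ZMod 2 → Submodule K A) (𝒳 : ZMod 2 → Submodule K X)
    (hA : IsZ2Decomp K 𝒜) (hX : IsZ2Decomp K 𝒳) (x : A ⊗[K] X)
    (h0 : x ∈ superTensorGrading K 𝒜 𝒳 0) (h1 : x ∈ superTensorGrading K 𝒜 𝒳 1) :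
    x = 0 := by
  obtain ⟨σ, s0, s1⟩ := exists_parity 𝒜 hA
  obtain ⟨τ, t0, t1⟩ := exists_parity 𝒳 hX
  have s0' : ∀ a ∈ 𝒜 0, σ a = (1 : K) • a := fun a h => by rw [s0 a h, one_smul]
  have s1' : ∀ a ∈ 𝒜 1, σ a = (-1 : K) • a := fun a h => by rw [s1 a h, neg_one_smul]
  have t0' : ∀ a ∈ 𝒳 0, τ a = (1 : K) • a := fun a h => by rw [t0 a h, one_smul]
  have t1' : ∀ a ∈ 𝒳 1, τ a = (-1 : K) • a := fun a h => by rw [t1 a h, neg_one_smul]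
  have e0 : TensorProduct.map σ τ x = x := by
    obtain ⟨y, hy, z, hz, rfl⟩ := Submodule.mem_sup.1 h0
    rw [map_add, map_on_piece _ _ σ τ 1 1 s0' t0' y hy,
      map_on_piece _ _ σ τ (-1) (-1) s1' t1' z hz]
    simp
  have e1 : TensorProduct.map σ τ x = -x := by
    obtain ⟨y, hy, z, hz, rfl⟩ := Submodule.mem_sup.1 h1
    rw [map_add, map_on_piece _ _ σ τ 1 (-1) s0' t1' y hy,
      map_on_piece _ _ σ τ (-1) 1 s1' t0' z hz]
    simp [add_comm]
  have h2 : (2 : K) • x = 0 := by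
    rw [two_smul]; nth_rewrite 1 [← e0]; rw [e1]; simp
  exact (smul_eq_zero.1 h2).resolve_left two_ne_zero

/-- If `(Ξ, ρ)` is an `A`-universal supermap for `B`, then `Q = ker ρ` is a
graded two-sided ideal of `B`, the quotient `B/Q` embeds into `A ⊗ Ξ` as a graded subalgebra
via the map induced by `ρ`, and `Q` is the smallest ideal with this property: any graded
ideal `Q₀` such that `B/Q₀` embeds (by a graded monomorphism) into some `A ⊗ F` contains `Q`. -/
theorem kernel_of_universal_supermap_minimal
    {K : Type u} [Field K] [CharZero K]
    {A : Type u} [Ring A] [Algebra K A] [FiniteDimensional K A]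
    (𝒜 : ZMod 2 → Submodule K A) (h𝒜 : IsZ2Grading K 𝒜)
    {B : Type u} [Ring B] [Algebra K B]
    (ℬ : ZMod 2 → Submodule K B) (hℬ : IsZ2Grading K ℬ)
    (Ξ : SuperAlg K) (ρ : B →ₐ[K] A ⊗[K] Ξ.carrier)
    (hU : IsUniversalSupermap K 𝒜 ℬ Ξ ρ) :
    IsTwoSidedSubmodule K (LinearMap.ker ρ.toLinearMap) ∧
    IsGradedSubmodule K ℬ (LinearMap.ker ρ.toLinearMap) ∧
    (∃ ρbar : RingQuot (idealRel K (LinearMap.ker ρ.toLinearMap)) →ₐ[K] A ⊗[K] Ξ.carrier,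
      ρbar.comp (RingQuot.mkAlgHom K (idealRel K (LinearMap.ker ρ.toLinearMap))) = ρ ∧
      Function.Injective ρbar ∧
      IsGradedHom K (quotGrading K ℬ (LinearMap.ker ρ.toLinearMap))
        (superTensorGrading K 𝒜 Ξ.grading) ρbar) ∧
    ∀ Q₀ : Submodule K B, IsTwoSidedSubmodule K Q₀ → IsGradedSubmodule K ℬ Q₀ →
      (∃ (F : SuperAlg K) (κ : RingQuot (idealRel K Q₀) →ₐ[K] A ⊗[K] F.carrier),
        Function.Injective κ ∧
        IsGradedHom K (quotGrading K ℬ Q₀) (superTensorGrading K 𝒜 F.grading) κ) →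
      LinearMap.ker ρ.toLinearMap ≤ Q₀ := by
  obtain ⟨hg, -, huniv⟩ := hU
  have hts : IsTwoSidedSubmodule K (LinearMap.ker ρ.toLinearMap) := by
    intro a x hx
    have hx' : ρ x = 0 := hx
    constructor
    · change ρ (a * x) = 0
      rw [map_mul, hx', mul_zero]
    · change ρ (x * a) = 0
      rw [map_mul, hx', zero_mul]
  refine ⟨hts, ?_, ?_, ?_⟩
  · apply le_antisymm
    · intro x hx
      have hx' : ρ x = 0 := hx
      have : x ∈ ℬ 0 ⊔ ℬ 1 := by rw [hℬ.1.1]; trivial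
      obtain ⟨y, hy, z, hz, rfl⟩ := Submodule.mem_sup.1 this
      rw [map_add] at hx'
      have hyz : ρ y = -ρ z := eq_neg_of_add_eq_zero_left hx'
      have y0 : ρ y = 0 := superTensor_disjoint 𝒜 Ξ.grading h𝒜.1 Ξ.isGrading.1 _
        (hg 0 y hy) (by rw [hyz]; exact Submodule.neg_mem _ (hg 1 z hz))
      have z0 : ρ z = 0 := by rw [y0, zero_add] at hx'; exact hx'
      exact Submodule.mem_sup.2 ⟨y, ⟨y0, hy⟩, z, ⟨z0, hz⟩, rfl⟩
    · exact sup_le inf_le_left inf_le_left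
  · have hρ : ∀ ⦃a b : B⦄, idealRel K (LinearMap.ker ρ.toLinearMap) a b → ρ a = ρ b := by
      intro a b h
      have h' : ρ (a - b) = 0 := h
      rwa [map_sub, sub_eq_zero] at h'
    have hl : ∀ b, RingQuot.liftAlgHom K ⟨ρ, hρ⟩
        (RingQuot.mkAlgHom K (idealRel K (LinearMap.ker ρ.toLinearMap)) b) = ρ b :=
      fun b => RingQuot.liftAlgHom_mkAlgHom_apply K ρ hρ b
    refine ⟨RingQuot.liftAlgHom K ⟨ρ, hρ⟩, AlgHom.ext hl, ?_, ?_⟩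
    · rw [injective_iff_map_eq_zero]
      intro q hq
      obtain ⟨b, rfl⟩ := RingQuot.mkAlgHom_surjective K _ q
      rw [hl] at hq
      rw [← map_zero (RingQuot.mkAlgHom K (idealRel K (LinearMap.ker ρ.toLinearMap)))]
      apply RingQuot.mkAlgHom_rel
      change ρ (b - 0) = 0
      rw [sub_zero, hq]
    · rintro k _ ⟨b, hb, rfl⟩
      have := hg k b hb
      rw [← hl] at this
      exact this
  · rintro Q₀ hQ - ⟨F, κ, hinj, hκ⟩ x hx
    have hx' : ρ x = 0 := hx
    obtain ⟨ζ, -, hζ⟩ := huniv F (κ.comp (RingQuot.mkAlgHom K (idealRel K Q₀)))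
      (fun k b hb => hκ k _ ⟨b, hb, rfl⟩)
    apply mk_eq_zero_mem Q₀ hQ
    apply hinj
    have := DFunLike.congr_fun hζ x
    simp only [AlgHom.comp_apply, hx', map_zero] at this
    rw [← this, map_zero]
end

section
/- Let K be a field of characteristic 0, A a finite-dimensional ℤ₂-graded associative unital K-algebra, B a ℤ₂-graded associative unital K-algebra, and let ρ: B → A⊗Ξ be a graded homomorphism into A tensored with a supercommutative K-algebra Ξ such that the only graded unital K-subalgebra Ξ' of Ξ with ρ(B) ⊆ A⊗Ξ' is Ξ' = Ξ. If B is finitely generated as a K-algebra, then Ξ is finitely generated as a K-algebra. -/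
open TensorProduct

universe u

theorem aux_elem {K : Type u} [Field K] {A X : Type u} [Ring A] [Algebra K A] [Ring X] [Algebra K X]
    (𝒳 : ZMod 2 → Submodule K X) (hX : IsZ2Grading K 𝒳) (z : A ⊗[K] X) :
    ∃ t : Finset X, (∀ x ∈ t, x ∈ 𝒳 0 ∨ x ∈ 𝒳 1) ∧ ∀ S : Subalgebra K X, (t : Set X) ⊆ S →
      z ∈ (Algebra.TensorProduct.map (AlgHom.id K A) S.val).range := by
  classical
  induction z using TensorProduct.induction_on with
  | zero => exact ⟨∅, by simp, fun S _ => zero_mem _⟩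
  | tmul a x =>
    have hx : x ∈ 𝒳 0 ⊔ 𝒳 1 := by rw [hX.1.1]; trivial
    obtain ⟨y, hy, w, hw, rfl⟩ := Submodule.mem_sup.1 hx
    refine ⟨{y, w}, ?_, fun S hS => ?_⟩
    · intro v hv
      simp only [Finset.mem_insert, Finset.mem_singleton] at hv
      rcases hv with rfl | rfl
      · exact Or.inl hy
      · exact Or.inr hw
    · have h1 : y ∈ S := hS (by simp)
      have h2 : w ∈ S := hS (by simp)
      exact ⟨a ⊗ₜ ⟨y + w, add_mem h1 h2⟩, by simp⟩
  | add z1 z2 h1 h2 =>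
    obtain ⟨t1, g1, k1⟩ := h1
    obtain ⟨t2, g2, k2⟩ := h2
    refine ⟨t1 ∪ t2, ?_, fun S hS => ?_⟩
    · intro x hx
      rcases Finset.mem_union.1 hx with h | h
      · exact g1 x h
      · exact g2 x h
    · rw [Finset.coe_union, Set.union_subset_iff] at hS
      exact add_mem (k1 S hS.1) (k2 S hS.2)

theorem aux_graded {K : Type u} [Field K] {X : Type u} [Ring X] [Algebra K X]
    (𝒳 : ZMod 2 → Submodule K X) (hX : IsZ2Grading K 𝒳) (t : Set X)
    (ht : ∀ x ∈ t, x ∈ 𝒳 0 ∨ x ∈ 𝒳 1) :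
    IsGradedSubalgebra K 𝒳 (Algebra.adjoin K t) := by
  obtain ⟨-, h1, hm⟩ := hX
  refine le_antisymm ?_ (sup_le inf_le_left inf_le_left)
  intro x hx
  replace hx : x ∈ Algebra.adjoin K t := hx
  have hmul : ∀ i j k : ZMod 2, i + j = k → ∀ a b : X,
      a ∈ Subalgebra.toSubmodule (Algebra.adjoin K t) ⊓ 𝒳 i →
      b ∈ Subalgebra.toSubmodule (Algebra.adjoin K t) ⊓ 𝒳 j →
      a * b ∈ Subalgebra.toSubmodule (Algebra.adjoin K t) ⊓ 𝒳 k := by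
    rintro i j k rfl a b ⟨ha, ha'⟩ ⟨hb, hb'⟩
    exact ⟨mul_mem (S := Subalgebra K X) ha hb, hm i j a ha' b hb'⟩
  induction hx using Algebra.adjoin_induction with
  | mem x hx =>
    have hx' := Algebra.subset_adjoin (R := K) hx
    rcases ht x hx with h | h
    · exact Submodule.mem_sup_left ⟨hx', h⟩
    · exact Submodule.mem_sup_right ⟨hx', h⟩
  | algebraMap r =>
    refine Submodule.mem_sup_left ⟨(Algebra.adjoin K t).algebraMap_mem r, ?_⟩
    rw [Algebra.algebraMap_eq_smul_one]
    exact Submodule.smul_mem _ _ h1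
  | add x y _ _ hx hy => exact add_mem hx hy
  | mul x y _ _ hx hy =>
    obtain ⟨a, ha, b, hb, rfl⟩ := Submodule.mem_sup.1 hx
    obtain ⟨c, hc, d, hd, rfl⟩ := Submodule.mem_sup.1 hy
    rw [add_mul, mul_add, mul_add]
    exact add_mem
      (add_mem (Submodule.mem_sup_left (hmul 0 0 0 (by decide) _ _ ha hc))
        (Submodule.mem_sup_right (hmul 0 1 1 (by decide) _ _ ha hd)))
      (add_mem (Submodule.mem_sup_right (hmul 1 0 1 (by decide) _ _ hb hc))
        (Submodule.mem_sup_left (hmul 1 1 0 (by decide) _ _ hb hd)))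

/-- If the entries of `ρ(B)` generate `Ξ` (i.e. the only graded subalgebra
`Ξ'` of `Ξ` with `ρ(B) ⊆ A ⊗ Ξ'` is `Ξ` itself) and `B` is finitely generated as a
`K`-algebra, then `Ξ` is finitely generated as a `K`-algebra. -/
theorem universal_supermap_finitely_generated
    {K : Type u} [Field K] [CharZero K]
    {A : Type u} [Ring A] [Algebra K A] [FiniteDimensional K A]
    (𝒜 : ZMod 2 → Submodule K A) (h𝒜 : IsZ2Grading K 𝒜)
    {B : Type u} [Ring B] [Algebra K B]
    (ℬ : ZMod 2 → Submodule K B) (hℬ : IsZ2Grading K ℬ)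
    (Ξ : SuperAlg K) (ρ : B →ₐ[K] A ⊗[K] Ξ.carrier)
    (hρ : IsGradedHom K ℬ (superTensorGrading K 𝒜 Ξ.grading) ρ)
    (hgen : ∀ S : Subalgebra K Ξ.carrier, IsGradedSubalgebra K Ξ.grading S →
      MapsIntoTensorSub K ρ S → S = ⊤)
    (hB : ∃ s : Finset B, Algebra.adjoin K (s : Set B) = ⊤) :
    ∃ t : Finset Ξ.carrier, Algebra.adjoin K (t : Set Ξ.carrier) = ⊤ := by
  classical
  obtain ⟨s, hs⟩ := hB
  choose f hf hf' using fun b : B => aux_elem (A := A) Ξ.grading Ξ.isGrading (ρ b)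
  refine ⟨s.biUnion f, hgen _ (aux_graded _ Ξ.isGrading _ ?_) ?_⟩
  · intro x hx
    obtain ⟨b, -, hb⟩ := Finset.mem_biUnion.1 (Finset.mem_coe.1 hx)
    exact hf b x hb
  · intro b
    set S := Algebra.adjoin K ((s.biUnion f : Finset Ξ.carrier) : Set Ξ.carrier) with hS
    have key : Algebra.adjoin K (s : Set B) ≤
        (Algebra.TensorProduct.map (AlgHom.id K A) S.val).range.comap ρ := by
      refine Algebra.adjoin_le fun b hb => ?_
      refine hf' b S fun x hx => Algebra.subset_adjoin ?_
      exact Finset.mem_coe.2 (Finset.mem_biUnion.2 ⟨b, hb, hx⟩)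
    rw [hs] at key
    obtain ⟨w, hw⟩ := key (Algebra.mem_top (x := b))
    exact ⟨w, hw⟩
end

section
/- Let K be a field of characteristic 0, A a finite-dimensional ℤ₂-graded associative unital K-algebra, B a ℤ₂-graded associative unital K-algebra, and (Ξ, ρ) an A-universal supermap for B. Assume B is formally smooth in the following sense: for every ℤ₂-graded associative unital K-algebra U and every ℤ₂-graded nilpotent two-sided ideal N of U, every graded K-algebra homomorphism B → U/N lifts to a graded K-algebra homomorphism B → U. Then Ξ is formally smooth as a supercommutative algebra: for every supercommutative K-algebra C and every ℤ₂-graded nilpotent ideal N of C, every graded K-algebra homomorphism γ: Ξ → C/N lifts to a graded K-algebra homomorphism Ξ → C (i.e. there exists a graded homomorphism η: Ξ → C with π_N∘η = γ, where π_N: C → C/N is the projection). -/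
open TensorProduct

universe u

section QuotDefs

variable (K : Type u) [Field K]

/-- A nilpotent ideal: all products of `s` elements of `N` vanish, for some `s ≥ 1`. -/
def IsNilpotentSubmodule {B : Type u} [Ring B] [Algebra K B]
    (N : Submodule K B) : Prop :=
  ∃ s : ℕ, 0 < s ∧ ∀ x : Fin s → B, (∀ i, x i ∈ N) → (List.ofFn x).prod = 0

end QuotDefs


namespace USM

section H
variable {K : Type u} [Field K]

lemma zmod_cases (i : ZMod 2) : i = 0 ∨ i = 1 := by
  revert i; decide

lemma tmul_mem {A X : Type*} [AddCommGroup A] [Module K A] [AddCommGroup X] [Module K X]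
    (𝒜 : ZMod 2 → Submodule K A) (𝒳 : ZMod 2 → Submodule K X) (i j : ZMod 2)
    {a : A} {x : X} (ha : a ∈ 𝒜 i) (hx : x ∈ 𝒳 j) :
    a ⊗ₜ[K] x ∈ superTensorGrading K 𝒜 𝒳 (i + j) := by
  rcases zmod_cases i with rfl | rfl
  · refine Submodule.mem_sup_left ⟨(⟨a, ha⟩ : 𝒜 0) ⊗ₜ (⟨x, ?_⟩ : 𝒳 (0 + j)), ?_⟩
    · simpa using hx
    · simp
  · have e : (1 + j + 1 : ZMod 2) = j := by clear hx; revert j; decide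
    refine Submodule.mem_sup_right ⟨(⟨a, ha⟩ : 𝒜 1) ⊗ₜ (⟨x, ?_⟩ : 𝒳 (1 + j + 1)), ?_⟩
    · rw [e]; exact hx
    · simp

lemma stg_le {A X : Type*} [AddCommGroup A] [Module K A] [AddCommGroup X] [Module K X]
    (𝒜 : ZMod 2 → Submodule K A) (𝒳 : ZMod 2 → Submodule K X) (k : ZMod 2)
    (P : Submodule K (A ⊗[K] X))
    (h : ∀ i j : ZMod 2, i + j = k → ∀ a ∈ 𝒜 i, ∀ x ∈ 𝒳 j, a ⊗ₜ[K] x ∈ P) :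
    superTensorGrading K 𝒜 𝒳 k ≤ P := by
  refine sup_le ?_ ?_
  · rintro _ ⟨t, rfl⟩
    induction t with
    | zero => simp
    | add a b ha hb => rw [map_add]; exact P.add_mem ha hb
    | tmul a x => exact h 0 k (by simp) a a.2 x x.2
  · rintro _ ⟨t, rfl⟩
    induction t with
    | zero => simp
    | add a b ha hb => rw [map_add]; exact P.add_mem ha hb
    | tmul a x => exact h 1 (k + 1) (by clear h x; revert k; decide) a a.2 x x.2

lemma decomp {A : Type*} [AddCommGroup A] [Module K A] {𝒜 : ZMod 2 → Submodule K A}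
    (h : IsZ2Decomp K 𝒜) (a : A) : ∃ a0 ∈ 𝒜 0, ∃ a1 ∈ 𝒜 1, a0 + a1 = a :=
  Submodule.mem_sup.1 (h.1 ▸ Submodule.mem_top : a ∈ 𝒜 0 ⊔ 𝒜 1)

lemma parity {A : Type*} [AddCommGroup A] [Module K A] {𝒜 : ZMod 2 → Submodule K A}
    (h : IsZ2Decomp K 𝒜) : ∃ σ : A →ₗ[K] A, ∀ i, ∀ a ∈ 𝒜 i, σ a = (-1 : K) ^ i.val • a := by
  have hc : IsCompl (𝒜 0) (𝒜 1) := ⟨disjoint_iff.2 h.2, codisjoint_iff.2 h.1⟩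
  refine ⟨LinearMap.ofIsCompl hc (𝒜 0).subtype (-(𝒜 1).subtype), fun i a ha => ?_⟩
  rcases zmod_cases i with rfl | rfl
  · have := LinearMap.ofIsCompl_apply_left hc (φ := (𝒜 0).subtype) (ψ := -(𝒜 1).subtype) ⟨a, ha⟩
    simpa using this
  · have := LinearMap.ofIsCompl_apply_right hc (φ := (𝒜 0).subtype) (ψ := -(𝒜 1).subtype) ⟨a, ha⟩
    simpa [ZMod.val_one] using this

lemma sTG_decomp [CharZero K] {A X : Type*} [AddCommGroup A] [Module K A]
    [AddCommGroup X] [Module K X]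
    {𝒜 : ZMod 2 → Submodule K A} {𝒳 : ZMod 2 → Submodule K X}
    (hA : IsZ2Decomp K 𝒜) (hX : IsZ2Decomp K 𝒳) :
    IsZ2Decomp K (superTensorGrading K 𝒜 𝒳) := by
  constructor
  · rw [eq_top_iff]
    rintro t -
    induction t with
    | zero => exact Submodule.zero_mem _
    | add a b ha hb => exact Submodule.add_mem _ ha hb
    | tmul a x =>
      obtain ⟨a0, h0, a1, h1, rfl⟩ := decomp hA a
      obtain ⟨x0, g0, x1, g1, rfl⟩ := decomp hX x
      simp only [TensorProduct.add_tmul, TensorProduct.tmul_add]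
      have e00 := tmul_mem 𝒜 𝒳 0 0 h0 g0
      have e01 := tmul_mem 𝒜 𝒳 0 1 h0 g1
      have e10 := tmul_mem 𝒜 𝒳 1 0 h1 g0
      have e11 := tmul_mem 𝒜 𝒳 1 1 h1 g1
      exact add_mem (add_mem (Submodule.mem_sup_left e00) (Submodule.mem_sup_right e10))
        (add_mem (Submodule.mem_sup_right e01) (Submodule.mem_sup_left e11))
  · obtain ⟨σ, hσ⟩ := parity hA
    obtain ⟨τ, hτ⟩ := parity hX
    rw [eq_bot_iff]
    rintro t ⟨ht0, ht1⟩
    have k0 := stg_le 𝒜 𝒳 0 (LinearMap.ker (TensorProduct.map σ τ - LinearMap.id)) (by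
      intro i j hij a ha x hx
      have : i = j := by clear ha hx; revert i j; decide
      subst this
      simp only [LinearMap.mem_ker, LinearMap.sub_apply, TensorProduct.map_tmul, hσ i a ha,
        hτ i x hx, LinearMap.id_apply, TensorProduct.smul_tmul_smul]
      rw [← mul_pow]; simp) ht0
    have k1 := stg_le 𝒜 𝒳 1 (LinearMap.ker (TensorProduct.map σ τ + LinearMap.id)) (by
      intro i j hij a ha x hx
      have : j = i + 1 := by clear ha hx; revert i j; decide
      subst this
      simp only [LinearMap.mem_ker, LinearMap.add_apply, TensorProduct.map_tmul, hσ i a ha,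
        hτ _ x hx, LinearMap.id_apply, TensorProduct.smul_tmul_smul]
      rcases zmod_cases i with rfl | rfl
      · simp [ZMod.val_one]
      · have : (1 + 1 : ZMod 2) = 0 := by decide
        simp [ZMod.val_one, this]) ht1
    simp only [LinearMap.mem_ker, LinearMap.sub_apply, LinearMap.add_apply,
      LinearMap.id_apply] at k0 k1
    have h2 : (2 : K) • t = 0 := by
      rw [two_smul]
      rw [sub_eq_zero.1 k0] at k1
      exact k1
    simpa using h2

lemma sTG_grading [CharZero K] {A X : Type*} [Ring A] [Algebra K A]
    [Ring X] [Algebra K X]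
    {𝒜 : ZMod 2 → Submodule K A} {𝒳 : ZMod 2 → Submodule K X}
    (hA : IsZ2Grading K 𝒜) (hX : IsZ2Grading K 𝒳) :
    IsZ2Grading K (superTensorGrading K 𝒜 𝒳) := by
  refine ⟨sTG_decomp hA.1 hX.1, ?_, ?_⟩
  · exact tmul_mem 𝒜 𝒳 0 0 hA.2.1 hX.2.1
  · intro i j s hs t ht
    have h1 : superTensorGrading K 𝒜 𝒳 i ≤
        (superTensorGrading K 𝒜 𝒳 (i + j)).comap (LinearMap.mulRight K t) := by
      refine stg_le _ _ _ _ ?_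
      intro p q hpq a ha x hx
      have h2 : superTensorGrading K 𝒜 𝒳 j ≤
          (superTensorGrading K 𝒜 𝒳 (i + j)).comap (LinearMap.mulLeft K (a ⊗ₜ[K] x)) := by
        refine stg_le _ _ _ _ ?_
        intro p' q' hpq' b hb y hy
        simp only [Submodule.mem_comap, LinearMap.mulLeft_apply,
          Algebra.TensorProduct.tmul_mul_tmul]
        have := tmul_mem 𝒜 𝒳 _ _ (hA.2.2 p p' a ha b hb) (hX.2.2 q q' x hx y hy)
        rwa [show p + p' + (q + q') = i + j by rw [← hpq, ← hpq']; abel] at this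
      exact h2 ht
    exact h1 hs

lemma ker_mk {C : Type u} [Ring C] [Algebra K C] {N : Submodule K C}
    (hN : IsTwoSidedSubmodule K N) {c : C}
    (h : RingQuot.mkAlgHom K (idealRel K N) c = 0) : c ∈ N := by
  let R : RingCon C :=
    { r := fun a b => a - b ∈ N
      iseqv := ⟨fun a => by simp, fun {a b} h => by simpa using N.neg_mem h,
        fun {a b c} h g => by simpa using N.add_mem h g⟩
      mul' := fun {a b c d} h g => by
        have := N.add_mem ((hN c _ h).2) ((hN b _ g).1)
        have e : a * c - b * d = (a - b) * c + b * (c - d) := by noncomm_ring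
        change a * c - b * d ∈ N
        rw [e]; exact this
      add' := fun {a b c d} h g => by
        have := N.add_mem h g
        have e : a + c - (b + d) = (a - b) + (c - d) := by abel
        change a + c - (b + d) ∈ N
        rw [e]; exact this }
  have w : ∀ ⦃x y⦄, idealRel K N x y → R.mk' x = R.mk' y := fun x y hxy => R.eq.2 hxy
  have h1 : RingQuot.mkRingHom (idealRel K N) c = 0 := by
    rw [← RingQuot.mkAlgHom_coe K]; exact h
  have h2 := RingQuot.lift_mkRingHom_apply R.mk' w c
  rw [h1, map_zero] at h2
  have h3 : R c 0 := R.eq.1 (h2.symm.trans (map_zero R.mk').symm)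
  have h4 : c - 0 ∈ N := h3
  simpa using h4

lemma quot_inf {C : Type u} [Ring C] [Algebra K C] {𝒞 : ZMod 2 → Submodule K C}
    (hC : IsZ2Decomp K 𝒞) {N : Submodule K C}
    (hN : IsTwoSidedSubmodule K N) (hg : IsGradedSubmodule K 𝒞 N)
    {y : RingQuot (idealRel K N)} (h0 : y ∈ quotGrading K 𝒞 N 0)
    (h1 : y ∈ quotGrading K 𝒞 N 1) : y = 0 := by
  obtain ⟨c0, hc0, rfl⟩ := h0
  obtain ⟨c1, hc1, e⟩ := h1
  have e' : RingQuot.mkAlgHom K (idealRel K N) c1 = RingQuot.mkAlgHom K (idealRel K N) c0 := e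
  have hd : c0 - c1 ∈ N := ker_mk hN (by rw [map_sub, e', sub_self])
  rw [hg] at hd
  obtain ⟨n0, hn0, n1, hn1, en⟩ := Submodule.mem_sup.1 hd
  have hz : c0 - n0 ∈ 𝒞 0 ⊓ 𝒞 1 := by
    refine ⟨sub_mem hc0 hn0.2, ?_⟩
    have : c0 - n0 = c1 + n1 := by
      rw [sub_eq_iff_eq_add, add_assoc, add_comm n1, en]; abel
    rw [this]; exact add_mem hc1 hn1.2
  rw [hC.2, Submodule.mem_bot, sub_eq_zero] at hz
  have hm : c0 ∈ N := hz ▸ hn0.1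
  have := RingQuot.mkAlgHom_rel K (s := idealRel K N) (x := c0) (y := 0)
    (by simpa [idealRel] using hm)
  simpa using this

/-- The ideal `A ⊗ N` of `A ⊗ C`. -/
noncomputable def tI (A : Type u) {C : Type u} [Ring A] [Algebra K A] [Ring C] [Algebra K C]
    (N : Submodule K C) : Submodule K (A ⊗[K] C) :=
  LinearMap.range (TensorProduct.map (LinearMap.id : A →ₗ[K] A) N.subtype)

variable {A C : Type u} [Ring A] [Algebra K A] [Ring C] [Algebra K C] {N : Submodule K C}

lemma tI_mem (a : A) {n : C} (hn : n ∈ N) : a ⊗ₜ[K] n ∈ tI A N :=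
  ⟨a ⊗ₜ ⟨n, hn⟩, by simp⟩

lemma tI_le (P : Submodule K (A ⊗[K] C)) (h : ∀ a : A, ∀ n ∈ N, a ⊗ₜ[K] n ∈ P) :
    tI A N ≤ P := by
  rintro _ ⟨t, rfl⟩
  induction t with
  | zero => simp
  | add a b ha hb => rw [map_add]; exact P.add_mem ha hb
  | tmul a x => exact h a x x.2

lemma tI_twoSided (hN : IsTwoSidedSubmodule K N) : IsTwoSidedSubmodule K (tI A N) := by
  intro u x hx
  induction u with
  | zero => simp
  | add a b ha hb =>
    rw [add_mul, mul_add]; exact ⟨add_mem ha.1 hb.1, add_mem ha.2 hb.2⟩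
  | tmul a c =>
    constructor
    · have : tI A N ≤ (tI A N).comap (LinearMap.mulLeft K (a ⊗ₜ[K] c)) := by
        refine tI_le _ fun b n hn => ?_
        simpa using tI_mem (a * b) (hN c n hn).1
      exact this hx
    · have : tI A N ≤ (tI A N).comap (LinearMap.mulRight K (a ⊗ₜ[K] c)) := by
        refine tI_le _ fun b n hn => ?_
        simpa using tI_mem (b * a) (hN c n hn).2
      exact this hx

lemma tI_graded {𝒜 : ZMod 2 → Submodule K A} {𝒞 : ZMod 2 → Submodule K C}
    (hA : IsZ2Decomp K 𝒜) (hg : IsGradedSubmodule K 𝒞 N) :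
    IsGradedSubmodule K (superTensorGrading K 𝒜 𝒞) (tI A N) := by
  refine le_antisymm ?_ (sup_le inf_le_left inf_le_left)
  refine tI_le _ fun a n hn => ?_
  rw [hg] at hn
  obtain ⟨n0, hn0, n1, hn1, rfl⟩ := Submodule.mem_sup.1 hn
  obtain ⟨a0, h0, a1, h1, rfl⟩ := decomp hA a
  simp only [TensorProduct.add_tmul, TensorProduct.tmul_add]
  have e00 := tmul_mem 𝒜 𝒞 0 0 h0 hn0.2
  have e01 := tmul_mem 𝒜 𝒞 0 1 h0 hn1.2
  have e10 := tmul_mem 𝒜 𝒞 1 0 h1 hn0.2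
  have e11 := tmul_mem 𝒜 𝒞 1 1 h1 hn1.2
  exact add_mem (add_mem (Submodule.mem_sup_left ⟨tI_mem _ hn0.1, e00⟩)
      (Submodule.mem_sup_right ⟨tI_mem _ hn0.1, e10⟩))
    (add_mem (Submodule.mem_sup_right ⟨tI_mem _ hn1.1, e01⟩)
      (Submodule.mem_sup_left ⟨tI_mem _ hn1.1, e11⟩))

lemma tI_prod (l : List (A ⊗[K] C)) (hl : ∀ x ∈ l, x ∈ tI A N) :
    l.prod ∈ Submodule.span K {t : A ⊗[K] C | ∃ (a : A) (m : List C),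
      m.length = l.length ∧ (∀ x ∈ m, x ∈ N) ∧ t = a ⊗ₜ[K] m.prod} := by
  induction l with
  | nil => exact Submodule.subset_span ⟨1, [], rfl, by simp, rfl⟩
  | cons y l ih =>
    have ih' := ih fun x hx => hl x (List.mem_cons_of_mem _ hx)
    have hy := hl y List.mem_cons_self
    rw [List.prod_cons]
    set P := Submodule.span K {t : A ⊗[K] C | ∃ (a : A) (m : List C),
      m.length = (y :: l).length ∧ (∀ x ∈ m, x ∈ N) ∧ t = a ⊗ₜ[K] m.prod} with hP
    have h1 : tI A N ≤ P.comap (LinearMap.mulRight K l.prod) := by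
      refine tI_le _ fun b n hn => ?_
      have h2 : Submodule.span K {t : A ⊗[K] C | ∃ (a : A) (m : List C),
          m.length = l.length ∧ (∀ x ∈ m, x ∈ N) ∧ t = a ⊗ₜ[K] m.prod} ≤
          P.comap (LinearMap.mulLeft K (b ⊗ₜ[K] n)) := by
        refine Submodule.span_le.2 ?_
        rintro _ ⟨a, m, hm, hmN, rfl⟩
        refine Submodule.subset_span ⟨b * a, n :: m, by simp [hm], ?_, by simp⟩
        intro x hx
        rcases List.mem_cons.1 hx with rfl | hx
        · exact hn
        · exact hmN x hx
      exact h2 ih'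
    exact h1 hy

lemma tI_nilp (hn : IsNilpotentSubmodule K N) : IsNilpotentSubmodule K (tI A N) := by
  obtain ⟨s, hs, h⟩ := hn
  refine ⟨s, hs, fun x hx => ?_⟩
  have h1 := tI_prod (N := N) (List.ofFn x) (by
    intro y hy
    obtain ⟨i, rfl⟩ := (List.mem_ofFn' x y).1 hy
    exact hx i)
  have h2 : {t : A ⊗[K] C | ∃ (a : A) (m : List C), m.length = (List.ofFn x).length ∧
      (∀ x ∈ m, x ∈ N) ∧ t = a ⊗ₜ[K] m.prod} ⊆ ((⊥ : Submodule K (A ⊗[K] C)) : Set _) := by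
    rintro _ ⟨a, m, hm, hmN, rfl⟩
    rw [List.length_ofFn] at hm
    subst hm
    have := h m.get (fun i => hmN _ (List.get_mem _ _))
    rw [List.ofFn_get] at this
    simp [this]
  exact (Submodule.mem_bot K).1 (Submodule.span_le.2 h2 h1)

end H

end USM

/-- If `(Ξ, ρ)` is an `A`-universal supermap for `B` and `B` is formally
smooth (graded maps into quotients by graded nilpotent ideals of ℤ₂-graded algebras lift),
then `Ξ` is formally smooth as a supercommutative algebra. -/
theorem universal_supermap_formally_smooth
    {K : Type u} [Field K] [CharZero K]
    {A : Type u} [Ring A] [Algebra K A] [FiniteDimensional K A]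
    (𝒜 : ZMod 2 → Submodule K A) (h𝒜 : IsZ2Grading K 𝒜)
    {B : Type u} [Ring B] [Algebra K B]
    (ℬ : ZMod 2 → Submodule K B) (hℬ : IsZ2Grading K ℬ)
    (Ξ : SuperAlg K) (ρ : B →ₐ[K] A ⊗[K] Ξ.carrier)
    (hU : IsUniversalSupermap K 𝒜 ℬ Ξ ρ)
    (hBsmooth : ∀ (U : Type u) [Ring U] [Algebra K U],
      ∀ 𝒰 : ZMod 2 → Submodule K U, IsZ2Grading K 𝒰 →
      ∀ N : Submodule K U, IsTwoSidedSubmodule K N → IsGradedSubmodule K 𝒰 N →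
        IsNilpotentSubmodule K N →
      ∀ f : B →ₐ[K] RingQuot (idealRel K N),
        IsGradedHom K ℬ (quotGrading K 𝒰 N) f →
        ∃ f' : B →ₐ[K] U, IsGradedHom K ℬ 𝒰 f' ∧
          (RingQuot.mkAlgHom K (idealRel K N)).comp f' = f) :
    ∀ (C : SuperAlg K) (N : Submodule K C.carrier),
      IsTwoSidedSubmodule K N → IsGradedSubmodule K C.grading N →
      IsNilpotentSubmodule K N →
      ∀ γ : Ξ.carrier →ₐ[K] RingQuot (idealRel K N),
        IsGradedHom K Ξ.grading (quotGrading K C.grading N) γ →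
        ∃ η : Ξ.carrier →ₐ[K] C.carrier,
          IsGradedHom K Ξ.grading C.grading η ∧
          (RingQuot.mkAlgHom K (idealRel K N)).comp η = γ := by
  intro C N hN hNg hNn γ hγ
  obtain ⟨hρ, hgen, huniv⟩ := hU
  set π := RingQuot.mkAlgHom K (idealRel K N) with hπ
  let I := USM.tI A N
  let π' := RingQuot.mkAlgHom K (idealRel K I)
  let incl : C.carrier →ₐ[K] RingQuot (idealRel K I) :=
    π'.comp Algebra.TensorProduct.includeRight
  have hincl : ∀ ⦃x y⦄, idealRel K N x y → incl x = incl y := by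
    intro x y hxy
    refine RingQuot.mkAlgHom_rel K ?_
    have := USM.tI_mem (A := A) (1 : A) hxy
    rw [TensorProduct.tmul_sub] at this
    exact this
  let rt : RingQuot (idealRel K N) →ₐ[K] RingQuot (idealRel K I) :=
    RingQuot.liftAlgHom K ⟨incl, hincl⟩
  have hrt : ∀ c, rt (π c) = π' (1 ⊗ₜ c) := fun c =>
    RingQuot.liftAlgHom_mkAlgHom_apply K incl hincl c
  let lf : A →ₐ[K] RingQuot (idealRel K I) := π'.comp Algebra.TensorProduct.includeLeft
  have hcomm : ∀ a y, Commute (lf a) (rt y) := by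
    intro a y
    obtain ⟨c, rfl⟩ := RingQuot.mkAlgHom_surjective K (idealRel K N) y
    change lf a * rt (π c) = rt (π c) * lf a
    rw [hrt]
    change π' (a ⊗ₜ 1) * _ = _ * π' (a ⊗ₜ 1)
    rw [← map_mul, ← map_mul]; simp
  let ψ : A ⊗[K] RingQuot (idealRel K N) →ₐ[K] RingQuot (idealRel K I) :=
    Algebra.TensorProduct.lift lf rt hcomm
  have hψ : ∀ a c, ψ (a ⊗ₜ π c) = π' (a ⊗ₜ c) := by
    intro a c
    change Algebra.TensorProduct.lift lf rt hcomm (a ⊗ₜ π c) = _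
    rw [Algebra.TensorProduct.lift_tmul, hrt]
    change π' (a ⊗ₜ 1) * _ = _
    rw [← map_mul]; simp
  let idπ : A ⊗[K] C.carrier →ₐ[K] A ⊗[K] RingQuot (idealRel K N) :=
    Algebra.TensorProduct.map (AlgHom.id K A) π
  have hidπ : ∀ ⦃x y⦄, idealRel K I x y → idπ x = idπ y := by
    intro x y hxy
    have hle : I ≤ LinearMap.ker idπ.toLinearMap := by
      refine USM.tI_le _ fun a n hn => ?_
      have h0 : π n = 0 := by
        have := RingQuot.mkAlgHom_rel K (s := idealRel K N) (x := n) (y := 0)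
          (by simpa [idealRel] using hn)
        simpa using this
      simp [idπ, h0]
    have := hle hxy
    rw [LinearMap.mem_ker, map_sub, sub_eq_zero] at this
    exact this
  let φ : RingQuot (idealRel K I) →ₐ[K] A ⊗[K] RingQuot (idealRel K N) :=
    RingQuot.liftAlgHom K ⟨idπ, hidπ⟩
  have hφ : ∀ u, φ (π' u) = idπ u := fun u =>
    RingQuot.liftAlgHom_mkAlgHom_apply K idπ hidπ u
  have hφψ : ∀ t, φ (ψ t) = t := by
    intro t
    induction t with
    | zero => simp
    | add a b ha hb => rw [map_add, map_add, ha, hb]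
    | tmul a y =>
      obtain ⟨c, rfl⟩ := RingQuot.mkAlgHom_surjective K (idealRel K N) y
      change φ (ψ (a ⊗ₜ π c)) = a ⊗ₜ π c
      rw [hψ, hφ]; simp [idπ]
  let idγ : A ⊗[K] Ξ.carrier →ₐ[K] A ⊗[K] RingQuot (idealRel K N) :=
    Algebra.TensorProduct.map (AlgHom.id K A) γ
  have hgr : IsGradedHom K ℬ (quotGrading K (superTensorGrading K 𝒜 C.grading) I)
      (ψ.comp (idγ.comp ρ)) := by
    intro k b hb
    have hle : superTensorGrading K 𝒜 Ξ.grading k ≤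
        (quotGrading K (superTensorGrading K 𝒜 C.grading) I k).comap
          (ψ.comp idγ).toLinearMap := by
      refine USM.stg_le _ _ _ _ ?_
      intro i j hij a ha x hx
      obtain ⟨c, hc, hcx⟩ := hγ j x hx
      have hcx' : π c = γ x := hcx
      refine ⟨a ⊗ₜ c, ?_, ?_⟩
      · rw [← hij]; exact USM.tmul_mem _ _ i j ha hc
      · change π' (a ⊗ₜ c) = ψ (idγ (a ⊗ₜ x))
        rw [← hψ, hcx']; simp [idγ]
    exact hle (hρ k b hb)
  obtain ⟨f', hf', hlift⟩ := hBsmooth (A ⊗[K] C.carrier) (superTensorGrading K 𝒜 C.grading)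
    (USM.sTG_grading h𝒜 C.isGrading) I (USM.tI_twoSided hN) (USM.tI_graded h𝒜.1 hNg)
    (USM.tI_nilp hNn) _ hgr
  obtain ⟨ζ, hζ, hζρ⟩ := huniv C f' hf'
  refine ⟨ζ, hζ, ?_⟩
  have key : ∀ b, Algebra.TensorProduct.map (AlgHom.id K A) (π.comp ζ) (ρ b) = idγ (ρ b) := by
    intro b
    have h1 : π' (f' b) = ψ (idγ (ρ b)) := AlgHom.congr_fun hlift b
    have h2 : Algebra.TensorProduct.map (AlgHom.id K A) ζ (ρ b) = f' b :=
      AlgHom.congr_fun hζρ b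
    have h3 : ∀ t, Algebra.TensorProduct.map (AlgHom.id K A) (π.comp ζ) t =
        idπ (Algebra.TensorProduct.map (AlgHom.id K A) ζ t) := by
      intro t
      induction t with
      | zero => simp
      | add a b ha hb => simp only [map_add, ha, hb]
      | tmul a y => simp [idπ]
    rw [h3, h2, ← hφ, h1, hφψ]
  have hS := hgen (AlgHom.equalizer (π.comp ζ) γ) ?_ ?_
  · ext x
    have : x ∈ AlgHom.equalizer (π.comp ζ) γ := hS ▸ Algebra.mem_top
    exact this
  · refine le_antisymm ?_ (sup_le inf_le_left inf_le_left)
    intro x hx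
    have hx' : π (ζ x) = γ x := hx
    obtain ⟨x0, h0, x1, h1, rfl⟩ := USM.decomp Ξ.isGrading.1 x
    have g : ∀ k, ∀ y ∈ Ξ.grading k, π (ζ y) - γ y ∈ quotGrading K C.grading N k := by
      intro k y hy
      exact sub_mem ⟨ζ y, hζ k y hy, rfl⟩ (hγ k y hy)
    have e : π (ζ x0) - γ x0 = -(π (ζ x1) - γ x1) := by
      simp only [map_add] at hx'
      rw [eq_neg_iff_add_eq_zero, sub_add_sub_comm, hx', sub_self]
    have z0 : π (ζ x0) - γ x0 = 0 := USM.quot_inf C.isGrading.1 hN hNg (g 0 x0 h0)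
      (e ▸ neg_mem (g 1 x1 h1))
    have z1 : π (ζ x1) - γ x1 = 0 := by
      rw [z0] at e; exact neg_eq_zero.1 e.symm
    exact add_mem (Submodule.mem_sup_left ⟨sub_eq_zero.1 z0, h0⟩)
      (Submodule.mem_sup_right ⟨sub_eq_zero.1 z1, h1⟩)
  · intro b
    have hm : ρ b ∈ LinearMap.eqLocus
        (AlgebraTensorModule.lTensor K A (π.comp ζ).toLinearMap)
        (AlgebraTensorModule.lTensor K A γ.toLinearMap) := key b
    rw [Module.Flat.eqLocus_lTensor_eq] at hm
    exact hm
end
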